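/- arXiv:1605.08204 — 8 statements merged into one kernel-verified Lean document; each statement's English description precedes it below -/
import Mathlib

section
/- Let R be the ring of infinitely differentiable functions ℝ → ℝ (the subalgebra of ℝ → ℝ consisting of functions that are ContDiff of every order, with pointwise operations), and let I be the ideal of R generated by the identity function x ↦ x. Let f : ℝ → ℝ be defined by f(x) = exp(−1/x) for x > 0 and f(x) = 0 for x ≤ 0. Then f ∈ R, f ≠ 0, and f ∈ Iⁿ for every n ≥ 1; in particular ki(I) := ⋂_{n=1}^∞ Iⁿ ≠ {0}. -/
set_option synthInstance.maxHeartbeats 400000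
set_option maxHeartbeats 800000

/-- The Krull intersection of an ideal `I`: the intersection `⋂_{n=1}^∞ Iⁿ`. -/
def ki {R : Type*} [CommRing R] (I : Ideal R) : Ideal R :=
  ⨅ (n : ℕ) (_ : 1 ≤ n), I ^ n

/-- The ring `C^∞(ℝ)` of infinitely differentiable functions `ℝ → ℝ`, as a subalgebra of
`ℝ → ℝ` (with pointwise operations) consisting of the functions that are `ContDiff` of
every (finite) order. -/
def SmoothFns : Subalgebra ℝ (ℝ → ℝ) where
  carrier := {f | ∀ n : ℕ, ContDiff ℝ n f}
  mul_mem' := fun hf hg n => (hf n).mul (hg n)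
  add_mem' := fun hf hg n => (hf n).add (hg n)
  algebraMap_mem' := fun _ _ => contDiff_const

/-- The identity function `x ↦ x` as an element of `C^∞(ℝ)`. -/
def idSmooth : SmoothFns := ⟨fun x => x, fun _ => contDiff_id⟩

/-- The function `f(x) = exp(-1/x)` for `x > 0`, and `f(x) = 0` for `x ≤ 0`. -/
noncomputable def fGlue : ℝ → ℝ := fun x => if 0 < x then Real.exp (-1 / x) else 0

theorem fGlue_eq_expNegInvGlue : fGlue = expNegInvGlue := by
  funext x
  by_cases hx : 0 < x
  · simp [fGlue, expNegInvGlue, hx, not_le.2 hx, neg_div]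
  · simp [fGlue, expNegInvGlue, hx, not_lt.1 hx]

theorem fGlue_smooth : fGlue ∈ SmoothFns := by
  intro n
  rw [fGlue_eq_expNegInvGlue]
  exact expNegInvGlue.contDiff (n := (n : ℕ∞))

theorem fGlue_ne_zero : fGlue ≠ (0 : ℝ → ℝ) := by
  intro h
  have h1 := congrFun h 1
  simp [fGlue] at h1

theorem quot_smooth (n : ℕ) : (fun x : ℝ => (x⁻¹) ^ n * fGlue x) ∈ SmoothFns := by
  intro m
  rw [fGlue_eq_expNegInvGlue]
  simpa using expNegInvGlue.contDiff_polynomial_eval_inv_mul (n := (m : ℕ∞))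
    (Polynomial.X ^ n)

theorem fGlue_mem_pow (hf : fGlue ∈ SmoothFns) (n : ℕ) :
    (⟨fGlue, hf⟩ : SmoothFns) ∈ (Ideal.span {idSmooth} : Ideal SmoothFns) ^ n := by
  rw [Ideal.span_singleton_pow, Ideal.mem_span_singleton]
  refine ⟨⟨_, quot_smooth n⟩, ?_⟩
  apply Subtype.ext
  funext x
  change fGlue x = x ^ n * ((x⁻¹) ^ n * fGlue x)
  by_cases hx : 0 < x
  · rw [← mul_assoc, ← mul_pow, mul_inv_cancel₀ hx.ne', one_pow, one_mul]
  · simp [fGlue, hx]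

/-- `fGlue` is smooth, nonzero, and belongs to `Iⁿ` for every `n ≥ 1`, where `I` is the ideal
of `C^∞(ℝ)` generated by the identity function; in particular `ki(I) ≠ {0}`. -/
theorem fGlue_mem_powers :
    fGlue ∈ SmoothFns ∧ fGlue ≠ (0 : ℝ → ℝ) ∧
    (∀ (hf : fGlue ∈ SmoothFns) (n : ℕ), 1 ≤ n →
      (⟨fGlue, hf⟩ : SmoothFns) ∈ (Ideal.span {idSmooth} : Ideal SmoothFns) ^ n) ∧
    ki (Ideal.span {idSmooth} : Ideal SmoothFns) ≠ ⊥ := by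
  refine ⟨fGlue_smooth, fGlue_ne_zero, fun hf n _ => fGlue_mem_pow hf n, ?_⟩
  intro h
  have hm : (⟨fGlue, fGlue_smooth⟩ : SmoothFns) ∈
      ki (Ideal.span {idSmooth} : Ideal SmoothFns) := by
    simp only [ki, Ideal.mem_iInf]
    exact fun n _ => fGlue_mem_pow fGlue_smooth n
  rw [h, Ideal.mem_bot] at hm
  exact fGlue_ne_zero (congrArg Subtype.val hm)
end

section
/- An ideal M of the polynomial ring ℂ[z₁, z₂, z₃, …] in countably many indeterminates over ℂ is maximal if and only if there exists a sequence of complex numbers ζ : ℕ → ℂ such that M is the ideal generated by the set {z_n − ζ_n : n ∈ ℕ}. -/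
open MvPolynomial

/-- Every polynomial is congruent to its value at `ζ` modulo the ideal of `ζ`. -/
lemma sub_eval_mem_span (ζ : ℕ → ℂ) (p : MvPolynomial ℕ ℂ) :
    p - C (eval ζ p) ∈
      Ideal.span (Set.range fun n : ℕ => (X n : MvPolynomial ℕ ℂ) - C (ζ n)) := by
  rw [← Ideal.Quotient.eq]
  induction p using MvPolynomial.induction_on with
  | C a => simp
  | add p q hp hq => simp only [map_add, hp, hq]
  | mul_X p n hp =>
    simp only [map_mul, hp, eval_X]
    congr 1
    rw [Ideal.Quotient.eq]
    exact Ideal.subset_span ⟨n, rfl⟩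

lemma span_eq_ker (ζ : ℕ → ℂ) :
    Ideal.span (Set.range fun n : ℕ => (X n : MvPolynomial ℕ ℂ) - C (ζ n)) =
      RingHom.ker (eval ζ) := by
  apply le_antisymm
  · rw [Ideal.span_le]
    rintro _ ⟨n, rfl⟩
    simp [RingHom.mem_ker]
  · intro p hp
    have h := sub_eval_mem_span ζ p
    rw [RingHom.mem_ker] at hp
    simpa [hp] using h

lemma span_isMaximal (ζ : ℕ → ℂ) :
    (Ideal.span (Set.range fun n : ℕ => (X n : MvPolynomial ℕ ℂ) - C (ζ n))).IsMaximal := by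
  rw [span_eq_ker]
  exact RingHom.ker_isMaximal_of_surjective _ fun a => ⟨C a, by simp⟩

lemma quotient_rank_le (M : Ideal (MvPolynomial ℕ ℂ)) :
    Module.rank ℂ (MvPolynomial ℕ ℂ ⧸ M) ≤ Cardinal.aleph0 := by
  refine (LinearMap.rank_le_of_surjective (Ideal.Quotient.mkₐ ℂ M).toLinearMap
    (Ideal.Quotient.mkₐ_surjective ℂ M)).trans ?_
  rw [← (MvPolynomial.basisMonomials ℕ ℂ).mk_eq_rank'']
  exact Cardinal.mk_le_aleph0

lemma quotient_isAlgebraic (M : Ideal (MvPolynomial ℕ ℂ)) [hM : M.IsMaximal] :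
    Algebra.IsAlgebraic ℂ (MvPolynomial ℕ ℂ ⧸ M) := by
  letI : Field (MvPolynomial ℕ ℂ ⧸ M) := Ideal.Quotient.field M
  refine ⟨fun x => ?_⟩
  by_contra hx
  have hx : Transcendental ℂ x := hx
  have h2 := hx.linearIndependent_sub_inv.cardinal_lift_le_rank
  have h3 := quotient_rank_le M
  simp only [Cardinal.lift_id, Cardinal.mk_complex] at h2
  exact absurd (h2.trans h3) (not_le.mpr Cardinal.aleph0_lt_continuum)

theorem maximal_iff_span_sub_const (M : Ideal (MvPolynomial ℕ ℂ)) :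
    M.IsMaximal ↔
      ∃ ζ : ℕ → ℂ, M = Ideal.span (Set.range fun n : ℕ => (X n : MvPolynomial ℕ ℂ) - C (ζ n)) := by
  constructor
  · intro hM
    have halg := quotient_isAlgebraic M
    have hsurj : Function.Surjective (algebraMap ℂ (MvPolynomial ℕ ℂ ⧸ M)) :=
      (IsAlgClosed.algebraMap_bijective_of_isIntegral (k := ℂ)).2
    choose ζ hζ using fun n => hsurj (Ideal.Quotient.mk M (X n))
    refine ⟨ζ, ((span_isMaximal ζ).eq_of_le hM.ne_top ?_).symm⟩
    rw [Ideal.span_le]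
    rintro _ ⟨n, rfl⟩
    exact Ideal.Quotient.eq.mp (hζ n).symm
  · rintro ⟨ζ, rfl⟩
    exact span_isMaximal ζ
end

section
/- For every proper ideal I of the polynomial ring ℂ[z₁, z₂, z₃, …] in countably many indeterminates over ℂ, the Krull intersection is trivial: ⋂_{n=1}^∞ Iⁿ = {0}. -/
/-- For every proper ideal `I` of the polynomial ring `ℂ[z₁, z₂, z₃, …]` in countably many
indeterminates over `ℂ`, the Krull intersection `⋂_{n=1}^∞ Iⁿ` is trivial. -/
theorem ki_eq_bot_of_proper (I : Ideal (MvPolynomial ℕ ℂ)) (hI : I ≠ ⊤) :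
    ki I = ⊥ := by
  have hnt : Nontrivial (MvPolynomial ℕ ℂ ⧸ I) := Ideal.Quotient.nontrivial_iff.mpr hI
  let K := MvPolynomial ℕ ℂ ⧸ I
  let q : MvPolynomial ℕ ℂ →+* K := Ideal.Quotient.mk I
  let j : ℂ →+* K := q.comp MvPolynomial.C
  have hj : Function.Injective j := j.injective
  let a : ℕ → K := fun i => q (MvPolynomial.X i)
  let t : MvPolynomial ℕ K →+* MvPolynomial ℕ K :=
    MvPolynomial.eval₂Hom MvPolynomial.C (fun i => MvPolynomial.X i + MvPolynomial.C (a i))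
  let s : MvPolynomial ℕ K →+* MvPolynomial ℕ K :=
    MvPolynomial.eval₂Hom MvPolynomial.C (fun i => MvPolynomial.X i - MvPolynomial.C (a i))
  have hst : s.comp t = RingHom.id _ := by
    apply MvPolynomial.ringHom_ext
    · intro r; simp [s, t]
    · intro i; simp [s, t]
  have ht : Function.Injective t :=
    Function.LeftInverse.injective (g := s) fun x => by
      simpa using congrArg (fun f => f x) hst
  let φ : MvPolynomial ℕ ℂ →+* MvPolynomial ℕ K := t.comp (MvPolynomial.map j)
  have hφ : Function.Injective φ := ht.comp (MvPolynomial.map_injective j hj)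
  have hc : (MvPolynomial.constantCoeff).comp φ = q := by
    apply MvPolynomial.ringHom_ext
    · intro r; simp [φ, t, j]
    · intro i; simp [φ, t, a]
  have hle : I.map φ ≤ MvPolynomial.idealOfVars ℕ K := by
    rw [Ideal.map_le_iff_le_comap]
    intro g hg
    rw [Ideal.mem_comap, ← pow_one (MvPolynomial.idealOfVars ℕ K),
      MvPolynomial.mem_pow_idealOfVars_iff']
    intro x hx
    have hx0 : x = 0 := by
      rw [← Finsupp.degree_eq_zero_iff]; omega
    subst hx0
    have h1 : MvPolynomial.constantCoeff (φ g) = q g := congrArg (fun f => f g) hc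
    rw [← MvPolynomial.constantCoeff_eq, h1]
    exact Ideal.Quotient.eq_zero_iff_mem.mpr hg
  rw [eq_bot_iff]
  intro f hf
  simp only [ki, Submodule.mem_iInf] at hf
  rw [Ideal.mem_bot]
  apply hφ
  rw [map_zero]
  ext x
  have h2 : φ f ∈ MvPolynomial.idealOfVars ℕ K ^ (x.degree + 1) := by
    apply Ideal.pow_right_mono hle
    rw [← Ideal.map_pow]
    exact Ideal.mem_map_of_mem _ (hf _ (by omega))
  rw [MvPolynomial.mem_pow_idealOfVars_iff'] at h2
  simpa using h2 x (by omega)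
end

section
/- Let D be a domain in ℂ and let I be a proper fixed ideal of H(D), i.e., I ≠ H(D) and there exists a point ζ ∈ D with f(ζ) = 0 for all f ∈ I. Then ki(I) := ⋂_{n=1}^∞ Iⁿ = {0}. -/
set_option synthInstance.maxHeartbeats 400000
set_option maxHeartbeats 800000

/-- The ring `H(D)` of holomorphic functions on a set `D ⊆ ℂ`, realized as the subalgebra of
`D → ℂ` (with pointwise operations) of functions admitting a holomorphic (complex
differentiable) extension to (an ambient function on) `D`. -/
def Hol (D : Set ℂ) : Subalgebra ℂ (D → ℂ) where
  carrier := {f | ∃ F : ℂ → ℂ, DifferentiableOn ℂ F D ∧ ∀ z : D, F z = f z}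
  add_mem' := by
    rintro f g ⟨F, hF, hFf⟩ ⟨G, hG, hGg⟩
    exact ⟨F + G, hF.add hG, fun z => by simp [hFf z, hGg z]⟩
  mul_mem' := by
    rintro f g ⟨F, hF, hFf⟩ ⟨G, hG, hGg⟩
    exact ⟨F * G, hF.mul hG, fun z => by simp [hFf z, hGg z]⟩
  algebraMap_mem' := fun c => ⟨fun _ => c, differentiableOn_const c, fun _ => rfl⟩

/-- The zero set `Z_D(f) = {z ∈ D : f(z) = 0}` of `f ∈ H(D)`. -/
def ZD {D : Set ℂ} (f : Hol D) : Set D := {z | (f : D → ℂ) z = 0}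

/-- `ordGE f ζ n` says that the order (multiplicity) of `ζ` as a zero of `f ∈ H(D)` is at
least `n`, expressed by the (equivalent, for `D` open) divisibility condition that
`(z - ζ)^n` divides `f` in `H(D)`. -/
def ordGE {D : Set ℂ} (f : Hol D) (ζ : D) (n : ℕ) : Prop :=
  ∃ g : Hol D, ∀ z : D, (f : D → ℂ) z = ((z : ℂ) - (ζ : ℂ)) ^ n * (g : D → ℂ) z

/-- Every element of `I ^ n` has a holomorphic extension vanishing to order at least `n`. -/
theorem pow_order {D : Set ℂ} (hD : IsOpen D) (I : Ideal (Hol D)) (ζ : D)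
    (hζ : ∀ f ∈ I, (f : D → ℂ) ζ = 0) (n : ℕ) : ∀ f ∈ I ^ n,
    ∃ F : ℂ → ℂ, DifferentiableOn ℂ F D ∧ (∀ z : D, F z = (f : D → ℂ) z) ∧
      (n : ℕ∞) ≤ analyticOrderAt F (ζ : ℂ) := by
  have an : ∀ F : ℂ → ℂ, DifferentiableOn ℂ F D → AnalyticAt ℂ F (ζ : ℂ) :=
    fun F hF => hF.analyticAt (hD.mem_nhds ζ.2)
  induction n with
  | zero =>
    intro f _
    obtain ⟨F, hF, hFf⟩ := f.2
    exact ⟨F, hF, hFf, by simp⟩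
  | succ n ih =>
    intro f hf
    rw [pow_succ] at hf
    refine Submodule.mul_induction_on hf ?_ ?_
    · intro a ha b hb
      obtain ⟨A, hA, hAa, hAn⟩ := ih a ha
      obtain ⟨B, hB, hBb⟩ := b.2
      refine ⟨A * B, hA.mul hB, fun z => by simp [hAa z, hBb z], ?_⟩
      rw [analyticOrderAt_mul (an A hA) (an B hB)]
      have h1 : analyticOrderAt B (ζ : ℂ) ≠ 0 :=
        (an B hB).analyticOrderAt_ne_zero.2 (by rw [hBb ζ]; exact hζ b hb)
      push_cast
      exact add_le_add hAn (Order.one_le_iff_pos.2 (pos_iff_ne_zero.2 h1))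
    · rintro a b ⟨A, hA, hAa, hAn⟩ ⟨B, hB, hBb, hBn⟩
      exact ⟨A + B, hA.add hB, fun z => by simp [hAa z, hBb z],
        (le_min hAn hBn).trans le_analyticOrderAt_add⟩

/-- If `D` is a domain in `ℂ` (a nonempty open connected set) and `I` is a proper fixed ideal
of `H(D)` (i.e. `I ≠ H(D)` and there is `ζ ∈ D` with `f(ζ) = 0` for all `f ∈ I`), then
`ki(I) = ⋂_{n=1}^∞ Iⁿ = {0}`. -/
theorem ki_eq_bot_of_fixed {D : Set ℂ} (hD : IsOpen D) (hDconn : IsConnected D)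
    (I : Ideal (Hol D)) (hI : I ≠ ⊤)
    (hfixed : ∃ ζ : D, ∀ f ∈ I, (f : D → ℂ) ζ = 0) :
    ki I = ⊥ := by
  obtain ⟨ζ, hζ⟩ := hfixed
  rw [eq_bot_iff]
  intro f hf
  obtain ⟨F, hF, hFf⟩ := f.2
  have htop : analyticOrderAt F (ζ : ℂ) = ⊤ := by
    rw [ENat.eq_top_iff_forall_ge]
    intro m
    have hm : f ∈ I ^ (m + 1) := by
      simp only [ki, Submodule.mem_iInf] at hf
      exact hf (m + 1) (by omega)
    obtain ⟨G, hG, hGf, hGn⟩ := pow_order hD I ζ hζ (m + 1) f hm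
    have hFG : F =ᶠ[nhds (ζ : ℂ)] G := by
      filter_upwards [hD.mem_nhds ζ.2] with z hz
      rw [hFf ⟨z, hz⟩, hGf ⟨z, hz⟩]
    rw [analyticOrderAt_congr hFG]
    exact le_trans (by exact_mod_cast Nat.le_succ m) hGn
  have h0 := (hF.analyticOnNhd hD).eqOn_zero_of_preconnected_of_eventuallyEq_zero
    hDconn.isPreconnected ζ.2 (analyticOrderAt_eq_top.1 htop)
  rw [Submodule.mem_bot]
  ext z
  rw [← hFf z]
  exact h0 z.2
end

section
/- Let D be a domain in ℂ and let M be a maximal ideal in the ring H(D). If f ∈ M and h ∈ H(D) is such that Z_D(f) ⊆ Z_D(h) (zero sets disregarding multiplicities), then h ∈ M. -/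
set_option synthInstance.maxHeartbeats 400000
set_option maxHeartbeats 800000

open Filter Topology Set Polynomial

/-- principal part -/
lemma principal_part (a : ℂ) (n : ℕ) : ∀ φ : ℂ → ℂ, AnalyticAt ℂ φ a →
    ∃ (P : ℂ[X]) (ψ : ℂ → ℂ), AnalyticAt ℂ ψ a ∧
      ∀ z, z ≠ a → φ z / (z - a) ^ n = P.eval ((z - a)⁻¹) + ψ z := by
  induction n with
  | zero => intro φ hφ; exact ⟨0, φ, hφ, by simp⟩
  | succ n ih =>
    intro φ hφ
    have h1 : AnalyticAt ℂ (dslope φ a) a := by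
      obtain ⟨p, hp⟩ := hφ
      exact ⟨_, hp.has_fpower_series_dslope_fslope⟩
    obtain ⟨P, ψ, hψ, hP⟩ := ih _ h1
    refine ⟨P + C (φ a) * X ^ (n + 1), ψ, hψ, fun z hz => ?_⟩
    have hzn : z - a ≠ 0 := sub_ne_zero.2 hz
    have := hP z hz
    rw [dslope_of_ne _ hz, slope_def_field] at this
    simp only [eval_add, eval_mul, eval_C, eval_pow, eval_X]
    have e : φ z / (z - a) ^ (n + 1) = (φ z - φ a) / (z - a) / (z - a) ^ n
        + φ a * (z - a)⁻¹ ^ (n + 1) := by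
      rw [inv_pow]
      field_simp
      ring
    rw [e, this]; ring

/-- uniform approximation of polynomials in an approximable function -/
lemma approx_poly (D K : Set ℂ) (g : ℂ → ℂ) (s : ℕ → ℂ → ℂ) (R : ℝ)
    (hs : ∀ n, DifferentiableOn ℂ (s n) D) (hg : ∀ z ∈ K, ‖g z‖ ≤ R)
    (hu : ∀ δ > 0, ∃ n, ∀ z ∈ K, ‖g z - s n z‖ < δ) (P : ℂ[X]) (ε : ℝ) (hε : 0 < ε) :
    ∃ Q : ℂ → ℂ, DifferentiableOn ℂ Q D ∧ ∀ z ∈ K, ‖P.eval (g z) - Q z‖ ≤ ε := by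
  have huc := (isCompact_closedBall (0 : ℂ) (R + 1)).uniformContinuousOn_of_continuous
    (f := fun x => P.eval x) P.continuous.continuousOn
  rw [Metric.uniformContinuousOn_iff] at huc
  obtain ⟨δ, hδ, H⟩ := huc ε hε
  obtain ⟨n, hn⟩ := hu (min δ 1) (lt_min hδ one_pos)
  refine ⟨fun z => P.eval (s n z), ?_, fun z hz => ?_⟩
  · exact P.differentiable.comp_differentiableOn (hs n)
  · have h1 := hn z hz
    have h2 := hg z hz
    rw [← dist_eq_norm]
    refine (H _ ?_ _ ?_ ?_).le
    · simp; linarith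
    · simp
      have := norm_sub_norm_le (s n z) (g z)
      rw [norm_sub_rev] at this
      have := h1.trans_le (min_le_right _ _)
      linarith
    · rw [dist_eq_norm]; exact h1.trans_le (min_le_left _ _)

lemma geom_half (w : ℂ) (hw : ‖w‖ ≤ 1 / 2) (n : ℕ) :
    ‖(1 - w)⁻¹ - ∑ k ∈ Finset.range n, w ^ k‖ ≤ 2 * (1 / 2) ^ n ∧ ‖(1 - w)⁻¹‖ ≤ 2 := by
  have h0 : (1 / 2 : ℝ) ≤ ‖1 - w‖ := by
    have := norm_sub_norm_le (1 : ℂ) w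
    simp at this; linarith
  have h1 : 1 - w ≠ 0 := by
    intro h; rw [h] at h0; norm_num at h0
  have h2 : ‖(1 - w)⁻¹‖ ≤ 2 := by
    rw [norm_inv]
    exact (inv_anti₀ (by norm_num) h0).trans (by norm_num)
  refine ⟨?_, h2⟩
  have e : (1 - w)⁻¹ - ∑ k ∈ Finset.range n, w ^ k = (1 - w)⁻¹ * w ^ n := by
    have := geom_sum_mul_neg w n
    field_simp
    rw [mul_comm, this]; ring
  rw [e, norm_mul, norm_pow]
  gcongr

lemma small_pow (δ c : ℝ) (hδ : 0 < δ) : ∃ n : ℕ, c * (2 * (1 / 2) ^ n) < δ := by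
  have : Tendsto (fun n : ℕ => c * (2 * (1 / 2 : ℝ) ^ n)) atTop (𝓝 (c * (2 * 0))) :=
    ((tendsto_pow_atTop_nhds_zero_of_lt_one (by norm_num) (by norm_num)).const_mul 2).const_mul c
  simp only [mul_zero] at this
  exact (this.eventually_lt_const hδ).exists

lemma approx_inf (D : Set ℂ) (a : ℂ) (P : ℂ[X]) (ε : ℝ) (hε : 0 < ε) :
    ∃ Q : ℂ → ℂ, DifferentiableOn ℂ Q D ∧
      ∀ z ∈ {z : ℂ | ‖z‖ < ‖a‖ / 2}, ‖P.eval ((z - a)⁻¹) - Q z‖ ≤ ε := by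
  by_cases ha : a = 0
  · refine ⟨0, differentiableOn_const _, fun z hz => ?_⟩
    simp [ha] at hz
    exact absurd hz (norm_nonneg z).not_gt
  have e : ∀ z, (z - a)⁻¹ = -a⁻¹ * (1 - z / a)⁻¹ := by
    intro z
    rw [neg_mul, ← mul_inv, mul_sub, mul_div_cancel₀ _ ha, mul_one, ← inv_neg, neg_sub]
  have hw : ∀ z ∈ {z : ℂ | ‖z‖ < ‖a‖ / 2}, ‖z / a‖ ≤ 1 / 2 := by
    intro z hz
    rw [norm_div, div_le_iff₀ (norm_pos_iff.2 ha)]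
    simp at hz; linarith
  refine approx_poly D _ _ (fun n z => -a⁻¹ * ∑ k ∈ Finset.range n, (z / a) ^ k) (‖a⁻¹‖ * 2) ?_ ?_ ?_ P ε hε
  · intro n; fun_prop
  · intro z hz
    rw [e, norm_mul, norm_neg]
    gcongr
    exact (geom_half _ (hw z hz) 0).2
  · intro δ hδ
    obtain ⟨n, hn⟩ := small_pow δ ‖a⁻¹‖ hδ
    refine ⟨n, fun z hz => lt_of_le_of_lt ?_ hn⟩
    rw [e, ← mul_sub, norm_mul, norm_neg]
    gcongr
    exact (geom_half _ (hw z hz) n).1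

lemma approx_pt (D : Set ℂ) (a c : ℂ) (hc : c ∉ D) (hac : a ≠ c) (P : ℂ[X]) (ε : ℝ) (hε : 0 < ε) :
    ∃ Q : ℂ → ℂ, DifferentiableOn ℂ Q D ∧
      ∀ z ∈ {z : ℂ | 2 * ‖a - c‖ ≤ ‖z - c‖}, ‖P.eval ((z - a)⁻¹) - Q z‖ ≤ ε := by
  have hpos : 0 < ‖a - c‖ := norm_pos_iff.2 (sub_ne_zero.2 hac)
  have hz0 : ∀ z ∈ {z : ℂ | 2 * ‖a - c‖ ≤ ‖z - c‖}, 0 < ‖z - c‖ := by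
    intro z hz
    simp at hz; linarith
  have e : ∀ z ∈ {z : ℂ | 2 * ‖a - c‖ ≤ ‖z - c‖},
      (z - a)⁻¹ = (z - c)⁻¹ * (1 - (a - c) / (z - c))⁻¹ := by
    intro z hz
    have : z - c ≠ 0 := norm_pos_iff.1 (hz0 z hz)
    rw [← mul_inv, mul_sub, mul_div_cancel₀ _ this]
    congr 1; ring
  have hw : ∀ z ∈ {z : ℂ | 2 * ‖a - c‖ ≤ ‖z - c‖}, ‖(a - c) / (z - c)‖ ≤ 1 / 2 := by
    intro z hz
    rw [norm_div, div_le_iff₀ (hz0 z hz)]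
    simp at hz; linarith
  have hi : ∀ z ∈ {z : ℂ | 2 * ‖a - c‖ ≤ ‖z - c‖}, ‖(z - c)⁻¹‖ ≤ ‖a - c‖⁻¹ := by
    intro z hz
    rw [norm_inv]
    refine inv_anti₀ hpos ?_
    simp at hz; linarith
  refine approx_poly D _ _
    (fun n z => (z - c)⁻¹ * ∑ k ∈ Finset.range n, ((a - c) / (z - c)) ^ k) (‖a - c‖⁻¹ * 2) ?_ ?_ ?_ P ε hε
  · intro n z hz
    have : z - c ≠ 0 := sub_ne_zero.2 (by rintro rfl; exact hc hz)
    apply DifferentiableAt.differentiableWithinAt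
    fun_prop (disch := assumption)
  · intro z hz
    rw [e z hz, norm_mul]
    exact mul_le_mul (hi z hz) (geom_half _ (hw z hz) 0).2 (norm_nonneg _) (by positivity)
  · intro δ hδ
    obtain ⟨n, hn⟩ := small_pow δ ‖a - c‖⁻¹ hδ
    refine ⟨n, fun z hz => lt_of_le_of_lt ?_ hn⟩
    rw [e z hz, ← mul_sub, norm_mul]
    exact mul_le_mul (hi z hz) (geom_half _ (hw z hz) n).1 (norm_nonneg _) (by positivity)

/-- The compact exhaustion. -/
lemma compact_CR (D : Set ℂ) (R : ℝ) (hR : 0 < R) :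
    IsCompact {a : ℂ | ‖a‖ ≤ R ∧ ∀ c, c ∉ D → 1 / R ≤ ‖a - c‖} ∧
    {a : ℂ | ‖a‖ ≤ R ∧ ∀ c, c ∉ D → 1 / R ≤ ‖a - c‖} ⊆ D := by
  constructor
  · apply Metric.isCompact_of_isClosed_isBounded
    · rw [ofPred_and]
      refine IsClosed.inter (isClosed_le continuous_norm continuous_const) ?_
      simp only [ofPred_forall]
      exact isClosed_iInter fun c => isClosed_iInter fun _ =>
        isClosed_le continuous_const (by fun_prop)
    · refine Metric.isBounded_closedBall (x := (0 : ℂ)) (r := R) |>.subset ?_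
      rintro a ⟨h, -⟩
      simpa using h
  · rintro a ⟨-, h⟩
    by_contra ha
    have := h a ha
    simp at this
    linarith

/-- Approximation sets. -/
lemma exists_K (D : Set ℂ) (hD : IsOpen D) : ∃ K : ℂ → Set ℂ,
    (∀ a ∈ D, a ∉ K a) ∧
    (∀ a ∈ D, ∀ (P : ℂ[X]) (ε : ℝ), 0 < ε → ∃ Q : ℂ → ℂ, DifferentiableOn ℂ Q D ∧
      ∀ z ∈ K a, ‖P.eval ((z - a)⁻¹) - Q z‖ ≤ ε) ∧
    ∀ z₀ ∈ D, ∃ r > 0, Metric.ball z₀ r ⊆ D ∧ ∃ C, IsCompact C ∧ C ⊆ D ∧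
      ∀ a ∈ D, ¬ Metric.ball z₀ r ⊆ K a → a ∈ C := by
  have key : ∀ a, ∃ K : Set ℂ, a ∈ D → 
      ((a ∉ K) ∧ (∀ (P : ℂ[X]) (ε : ℝ), 0 < ε → ∃ Q : ℂ → ℂ, DifferentiableOn ℂ Q D ∧
      ∀ z ∈ K, ‖P.eval ((z - a)⁻¹) - Q z‖ ≤ ε) ∧
      ((K = {z : ℂ | ‖z‖ < ‖a‖ / 2} ∧ ∀ c, c ∉ D → 1 ≤ ‖a - c‖ * ‖a‖) ∨
        ∃ c, c ∉ D ∧ K = {z : ℂ | 2 * ‖a - c‖ ≤ ‖z - c‖} ∧ ‖a - c‖ * ‖a‖ < 1 ∧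
          ∀ cc, cc ∉ D → ‖a - c‖ ≤ ‖a - cc‖)) := by
    intro a
    by_cases h : ∀ c, c ∉ D → 1 ≤ ‖a - c‖ * ‖a‖
    · refine ⟨{z : ℂ | ‖z‖ < ‖a‖ / 2}, fun ha => ⟨?_, approx_inf D a, Or.inl ⟨rfl, h⟩⟩⟩
      simp only [mem_ofPred_eq, not_lt]
      linarith [norm_nonneg a]
    · push Not at h
      obtain ⟨c₀, hc₀, hlt⟩ := h
      obtain ⟨c, hc, hmin⟩ := hD.isClosed_compl.exists_infDist_eq_dist ⟨c₀, hc₀⟩ a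
      have hm : ∀ cc, cc ∉ D → ‖a - c‖ ≤ ‖a - cc‖ := by
        intro cc hcc
        rw [← dist_eq_norm, ← dist_eq_norm, ← hmin]
        exact Metric.infDist_le_dist_of_mem hcc
      refine ⟨{z : ℂ | 2 * ‖a - c‖ ≤ ‖z - c‖}, fun ha => ?_⟩
      have hac : a ≠ c := by rintro rfl; exact hc ha
      have hpos : 0 < ‖a - c‖ := norm_pos_iff.2 (sub_ne_zero.2 hac)
      refine ⟨?_, approx_pt D a c hc hac, Or.inr ⟨c, hc, rfl, ?_, hm⟩⟩
      · simp only [mem_ofPred_eq, not_le]; linarith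
      · refine lt_of_le_of_lt ?_ hlt
        gcongr
        exact hm c₀ hc₀
  choose K hK using key
  refine ⟨K, fun a ha => (hK a ha).1, fun a ha => (hK a ha).2.1, ?_⟩
  intro z₀ hz₀
  obtain ⟨r, hr, hball⟩ := Metric.isOpen_iff.1 hD z₀ hz₀
  set R : ℝ := 2 * (‖z₀‖ + r) + 4 / r with hRdef
  have hr4 : 0 < 4 / r := by positivity
  have hR : 0 < R := by positivity
  have hRr : 1 / R ≤ r / 4 := by
    rw [div_le_iff₀ hR]
    have : r / 4 * (4 / r) = 1 := by field_simp
    have : 0 ≤ r / 4 * (2 * (‖z₀‖ + r)) := by positivity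
    rw [hRdef, mul_add]; linarith
  refine ⟨r / 2, by positivity, (Metric.ball_subset_ball (by linarith)).trans hball, _, 
    (compact_CR D R hR).1, (compact_CR D R hR).2, ?_⟩
  intro a ha hnot
  rw [not_subset] at hnot
  obtain ⟨z, hz, hzK⟩ := hnot
  rw [Metric.mem_ball, dist_eq_norm] at hz
  rcases (hK a ha).2.2 with ⟨h1, h2⟩ | ⟨c, hc, h1, h2, h3⟩
  · rw [h1] at hzK
    simp only [mem_ofPred_eq, not_lt] at hzK
    have := norm_sub_norm_le z z₀
    have haR : ‖a‖ ≤ R := by linarith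
    refine ⟨haR, fun c hc => ?_⟩
    rw [div_le_iff₀ hR]
    exact (h2 c hc).trans (by gcongr)
  · rw [h1] at hzK
    simp only [mem_ofPred_eq, not_le] at hzK
    have h4 : r ≤ ‖z₀ - c‖ := by
      by_contra hlt
      push Not at hlt
      apply hc; apply hball
      rwa [Metric.mem_ball, dist_comm, dist_eq_norm]
    have h5 : ‖z₀ - c‖ ≤ ‖z - z₀‖ + ‖z - c‖ := by
      have := norm_sub_le (z - c) (z - z₀)
      simp at this; linarith
    have h6 : r / 4 < ‖a - c‖ := by linarith
    refine ⟨?_, fun cc hcc => ?_⟩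
    · have h7 : r / 4 * ‖a‖ ≤ 1 := le_trans (by gcongr) h2.le
      have : ‖a‖ ≤ 4 / r := by
        rw [le_div_iff₀ hr]; linarith
      have := norm_nonneg z₀
      linarith
    · linarith [h3 cc hcc]

/-- Every subset of an open set with finite intersections with compacta is countable. -/
lemma countable_Z (D Z : Set ℂ) (hD : IsOpen D) (hZD : Z ⊆ D)
    (hfin : ∀ C, IsCompact C → C ⊆ D → (C ∩ Z).Finite) : Z.Countable := by
  have hZ : Z ⊆ ⋃ n : ℕ, ({a : ℂ | ‖a‖ ≤ (n + 1 : ℝ) ∧ ∀ c, c ∉ D → 1 / (n + 1 : ℝ) ≤ ‖a - c‖} ∩ Z) := by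
    intro a ha
    obtain ⟨r, hr, hball⟩ := Metric.isOpen_iff.1 hD a (hZD ha)
    obtain ⟨n, hn⟩ := exists_nat_ge (‖a‖ + 1 / r)
    have h1r : 0 < 1 / r := by positivity
    refine mem_iUnion.2 ⟨n, ⟨by linarith, fun c hc => ?_⟩, ha⟩
    have h4 : r ≤ ‖a - c‖ := by
      by_contra hlt
      push Not at hlt
      apply hc; apply hball
      rwa [Metric.mem_ball, dist_comm, dist_eq_norm]
    refine le_trans ?_ h4
    rw [one_div_le (by positivity) hr]
    linarith [norm_nonneg a]
  refine Countable.mono hZ (countable_iUnion fun n => ?_)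
  have := compact_CR D (n + 1 : ℝ) (by positivity)
  exact (hfin _ this.1 this.2).countable

/-- Mittag-Leffler. -/
lemma mittag_leffler (D Z : Set ℂ) (hD : IsOpen D) (hZD : Z ⊆ D)
    (hfin : ∀ C, IsCompact C → C ⊆ D → (C ∩ Z).Finite) (P : ℂ → ℂ[X]) :
    ∃ u : ℂ → ℂ, (∀ z ∈ D, z ∉ Z → AnalyticAt ℂ u z) ∧
      ∀ a ∈ Z, ∃ ψ : ℂ → ℂ, AnalyticAt ℂ ψ a ∧
        ∀ᶠ z in 𝓝[≠] a, u z = (P a).eval ((z - a)⁻¹) + ψ z := by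
  classical
  obtain ⟨K, hK1, hK2, hK3⟩ := exists_K D hD
  have hcount := countable_Z D Z hD hZD hfin
  obtain ⟨ε, hε, c, hsum, -⟩ := hcount.exists_pos_hasSum_le one_pos
  have hQ : ∀ a : Z, ∃ Q : ℂ → ℂ, DifferentiableOn ℂ Q D ∧
      ∀ z ∈ K a, ‖(P a).eval ((z - a)⁻¹) - Q z‖ ≤ ε a :=
    fun a => hK2 a (hZD a.2) (P a) (ε a) (hε a)
  choose Q hQd hQ using hQ
  set T : Z → ℂ → ℂ := fun a z => (P a).eval ((z - a)⁻¹) - Q a z with hT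
  have hTd : ∀ (a : Z) z, z ∈ D → z ≠ a → AnalyticAt ℂ (T a) z := by
    intro a z hz hza
    have h1 : AnalyticAt ℂ (fun z : ℂ => (z - a)⁻¹) z :=
      (analyticAt_id.sub analyticAt_const).inv (sub_ne_zero.2 hza)
    have h2 : AnalyticAt ℂ (fun z : ℂ => (P a).eval ((z - a)⁻¹)) z :=
      AnalyticAt.comp (g := fun x => (P a).eval x) (f := fun z : ℂ => (z - a)⁻¹)
        ((P a).differentiable.analyticAt _) h1
    exact h2.sub ((hQd a).analyticAt (hD.mem_nhds hz))
  -- local structure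
  have loc : ∀ z₀ ∈ D, ∃ (F : Finset Z) (v : ℂ → ℂ), AnalyticAt ℂ v z₀ ∧
      (∀ᶠ z in 𝓝 z₀, ∑' a, T a z = ∑ a ∈ F, T a z + v z) ∧ ∀ a : Z, (a : ℂ) = z₀ → a ∈ F := by
    intro z₀ hz₀
    obtain ⟨r, hr, hrD, C, hC, hCD, hbad⟩ := hK3 z₀ hz₀
    have hF : {a : Z | (a : ℂ) ∈ C}.Finite := by
      have := (hfin C hC hCD).preimage (Subtype.val_injective (p := (· ∈ Z))).injOn
      refine this.subset ?_
      intro a ha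
      exact ⟨ha, a.2⟩
    have hgood : ∀ a : {a : Z // a ∉ hF.toFinset}, Metric.ball z₀ r ⊆ K a := by
      rintro ⟨a, ha⟩
      by_contra hn
      exact ha (hF.mem_toFinset.2 (hbad a (hZD a.2) hn))
    refine ⟨hF.toFinset, fun z => ∑' a : {a : Z // a ∉ hF.toFinset}, T a z, ?_, ?_, ?_⟩
    · have : DifferentiableOn ℂ (fun z => ∑' a : {a : Z // a ∉ hF.toFinset}, T a z)
          (Metric.ball z₀ r) := by
        refine Complex.differentiableOn_tsum_of_summable_norm
          (u := fun a : {a : Z // a ∉ hF.toFinset} => ε a) ?_ ?_ Metric.isOpen_ball ?_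
        · exact hsum.summable.comp_injective (i := fun a : {a : Z // a ∉ hF.toFinset} => (a : Z))
            Subtype.val_injective
        · intro a z hz
          refine (hTd a z (hrD hz) ?_).differentiableAt.differentiableWithinAt
          rintro rfl
          exact hK1 _ (hZD a.1.2) (hgood a hz)
        · intro a z hz
          exact hQ a z (hgood a hz)
      exact this.analyticAt (Metric.ball_mem_nhds _ hr)
    · filter_upwards [Metric.ball_mem_nhds z₀ hr] with z hz
      symm
      apply Summable.sum_add_tsum_subtype_compl
      rw [← Finset.summable_compl_iff hF.toFinset]
      refine Summable.of_norm_bounded (g := fun a : {a : Z // a ∉ hF.toFinset} => ε a) ?_ ?_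
      · exact hsum.summable.comp_injective (i := fun a : {a : Z // a ∉ hF.toFinset} => (a : Z))
            Subtype.val_injective
      · intro a
        exact hQ a z (hgood a hz)
    · rintro a rfl
      by_contra hn
      exact hK1 _ (hZD a.2) (hgood ⟨a, hn⟩ (Metric.mem_ball_self hr))
  refine ⟨fun z => ∑' a, T a z, fun z hz hzZ => ?_, fun a ha => ?_⟩
  · obtain ⟨F, v, hv, he, -⟩ := loc z hz
    refine AnalyticAt.congr ?_ (EventuallyEq.symm he)
    refine AnalyticAt.fun_add (Finset.analyticAt_fun_sum F fun a _ => hTd a z hz ?_) hv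
    rintro rfl; exact hzZ a.2
  · obtain ⟨F, v, hv, he, hmem⟩ := loc a (hZD ha)
    refine ⟨fun z => (∑ b ∈ F.erase ⟨a, ha⟩, T b z + v z) - Q ⟨a, ha⟩ z, ?_, ?_⟩
    · refine AnalyticAt.fun_sub (AnalyticAt.fun_add (Finset.analyticAt_fun_sum _ fun b hb => hTd b a (hZD ha) ?_) hv)
        ((hQd _).analyticAt (hD.mem_nhds (hZD ha)))
      intro h
      exact (Finset.mem_erase.1 hb).1 (Subtype.ext h.symm)
    · filter_upwards [nhdsWithin_le_nhds he] with z hz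
      rw [hz, ← Finset.add_sum_erase F _ (hmem ⟨a, ha⟩ rfl)]
      simp only [hT]
      ring

lemma glue (D : Set ℂ) (hD : IsOpen D) (G : ℂ → ℂ)
    (hG : ∀ z₀ ∈ D, ∃ g : ℂ → ℂ, AnalyticAt ℂ g z₀ ∧ ∀ᶠ z in 𝓝[≠] z₀, G z = g z) :
    ∃ A : ℂ → ℂ, DifferentiableOn ℂ A D ∧ ∀ z₀ ∈ D, ∀ᶠ z in 𝓝[≠] z₀, A z = G z := by
  choose! g hg hGg using hG
  have key : ∀ z₀ ∈ D, ∀ᶠ z in 𝓝 z₀, g z z = g z₀ z := by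
    intro z₀ hz₀
    rw [eventually_nhds_iff]
    have h1 := hGg z₀ hz₀
    rw [eventually_nhdsWithin_iff, ← eventually_eventually_nhds] at h1
    rw [← eventually_nhds_iff]
    filter_upwards [h1, (hg z₀ hz₀).eventually_analyticAt, hD.mem_nhds hz₀] with z h2 h3 hzD
    by_cases hz : z = z₀
    · rw [hz]
    have h4 : ∀ᶠ w in 𝓝[≠] z, g z w = g z₀ w := by
      have h5 : ∀ᶠ w in 𝓝[≠] z, w ≠ z₀ :=
        nhdsWithin_le_nhds (isOpen_ne.mem_nhds hz)
      filter_upwards [hGg z hzD, nhdsWithin_le_nhds h2, h5] with w h6 h7 h8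
      rw [← h6, h7 h8]
    exact (((hg z hzD).continuousAt.eventuallyEq_nhds_iff_eventuallyEq_nhdsNE
      h3.continuousAt).1 h4).eq_of_nhds
  refine ⟨fun z => g z z, fun z₀ hz₀ => ?_, fun z₀ hz₀ => ?_⟩
  · exact ((hg z₀ hz₀).congr (EventuallyEq.symm (key z₀ hz₀))).differentiableAt.differentiableWithinAt
  · filter_upwards [nhdsWithin_le_nhds (key z₀ hz₀), hGg z₀ hz₀] with z h1 h2
    rw [h1, h2]

lemma bezout (D : Set ℂ) (hD : IsOpen D) (hconn : IsConnected D) (F p : ℂ → ℂ)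
    (hF : DifferentiableOn ℂ F D) (hp : DifferentiableOn ℂ p D)
    (hne : ∃ z ∈ D, F z ≠ 0) (hno : ∀ z ∈ D, F z = 0 → p z ≠ 0) :
    ∃ A B : ℂ → ℂ, DifferentiableOn ℂ A D ∧ DifferentiableOn ℂ B D ∧
      ∀ z ∈ D, A z * F z + B z * p z = 1 := by
  have hFa : AnalyticOnNhd ℂ F D := hF.analyticOnNhd hD
  have hpa : AnalyticOnNhd ℂ p D := hp.analyticOnNhd hD
  have hnf : ∀ z ∈ D, ¬ ∃ᶠ w in 𝓝[≠] z, F w = 0 := by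
    intro z hz hfr
    obtain ⟨w, hw, hw0⟩ := hne
    exact hw0 (hFa.eqOn_zero_of_preconnected_of_frequently_eq_zero hconn.isPreconnected hz hfr hw)
  set Z : Set ℂ := {z | z ∈ D ∧ F z = 0} with hZ
  have hfin : ∀ C, IsCompact C → C ⊆ D → (C ∩ Z).Finite := by
    intro C hC hCD
    by_contra hinf
    obtain ⟨x, hx, hacc⟩ := Set.Infinite.exists_accPt_of_subset_isCompact hinf hC inter_subset_left
    rw [accPt_iff_frequently_nhdsNE] at hacc
    exact hnf x (hCD hx) (hacc.mono fun y hy => hy.2.2)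
  have hpp : ∀ a, ∃ P : ℂ[X], a ∈ Z → ∃ ψ : ℂ → ℂ, AnalyticAt ℂ ψ a ∧
      ∀ᶠ z in 𝓝[≠] a, (p z * F z)⁻¹ = P.eval ((z - a)⁻¹) + ψ z := by
    intro a
    by_cases ha : a ∈ Z
    · have hm : MeromorphicAt (fun z => (p z * F z)⁻¹) a :=
        ((hpa a ha.1).mul (hFa a ha.1)).meromorphicAt.inv
      obtain ⟨n, hn⟩ := hm
      obtain ⟨P, ψ, hψ, h⟩ := principal_part a n _ hn
      refine ⟨P, fun _ => ⟨ψ, hψ, ?_⟩⟩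
      filter_upwards [self_mem_nhdsWithin] with z hz
      rw [← h z hz]
      have : z - a ≠ 0 := sub_ne_zero.2 hz
      simp only [smul_eq_mul]
      rw [mul_div_cancel_left₀ _ (pow_ne_zero n this)]
    · exact ⟨0, fun h => absurd h ha⟩
  choose P hP using hpp
  obtain ⟨u, hu1, hu2⟩ := mittag_leffler D Z hD (fun z hz => hz.1) hfin P
  have hloc : ∀ a ∈ Z, ∃ ψ : ℂ → ℂ, AnalyticAt ℂ ψ a ∧
      ∀ᶠ z in 𝓝[≠] a, u z = (p z * F z)⁻¹ + ψ z := by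
    intro a ha
    obtain ⟨ψ₁, h1, h2⟩ := hP a ha
    obtain ⟨ψ₂, h3, h4⟩ := hu2 a ha
    refine ⟨fun z => ψ₂ z - ψ₁ z, h3.sub h1, ?_⟩
    filter_upwards [h2, h4] with z h5 h6
    rw [h5, h6]; ring
  have hF0 : ∀ z ∈ D, ∀ᶠ w in 𝓝[≠] z, F w ≠ 0 := fun z hz => not_frequently.1 (hnf z hz)
  have hp0 : ∀ a ∈ Z, ∀ᶠ w in 𝓝[≠] a, p w ≠ 0 := fun a ha =>
    nhdsWithin_le_nhds ((hpa a ha.1).continuousAt.eventually_ne (hno a ha.1 ha.2))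
  obtain ⟨B, hB, hBe⟩ := glue D hD (fun z => u z * F z) (by
    intro z hz
    by_cases hzZ : z ∈ Z
    · obtain ⟨ψ, h1, h2⟩ := hloc z hzZ
      refine ⟨fun w => (p w)⁻¹ + ψ w * F w,
        ((hpa z hz).inv (hno z hz hzZ.2)).fun_add (h1.fun_mul (hFa z hz)), ?_⟩
      filter_upwards [h2, hF0 z hz, hp0 z hzZ] with w h3 h4 h5
      rw [h3]; field_simp
    · exact ⟨_, (hu1 z hz hzZ).fun_mul (hFa z hz), Eventually.of_forall fun _ => rfl⟩)
  obtain ⟨A, hA, hAe⟩ := glue D hD (fun z => (F z)⁻¹ - p z * u z) (by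
    intro z hz
    by_cases hzZ : z ∈ Z
    · obtain ⟨ψ, h1, h2⟩ := hloc z hzZ
      refine ⟨fun w => - (p w * ψ w), ((hpa z hz).fun_mul h1).neg, ?_⟩
      filter_upwards [h2, hF0 z hz, hp0 z hzZ] with w h3 h4 h5
      rw [h3]; field_simp; ring
    · exact ⟨_, ((hFa z hz).inv fun h => hzZ ⟨hz, h⟩).fun_sub ((hpa z hz).fun_mul (hu1 z hz hzZ)),
        Eventually.of_forall fun _ => rfl⟩)
  refine ⟨A, B, hA, hB, fun z hz => ?_⟩
  have hc : ∀ {f : ℂ → ℂ}, DifferentiableOn ℂ f D → ContinuousAt f z := fun hf =>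
    (hf.differentiableAt (hD.mem_nhds hz)).continuousAt
  have hev : (fun w => A w * F w + B w * p w) =ᶠ[𝓝[≠] z] fun _ => 1 := by
    filter_upwards [hAe z hz, hBe z hz, hF0 z hz] with w h1 h2 h3
    rw [h1, h2]; field_simp; ring
  exact ((((hc hA).mul (hc hF)).add ((hc hB).mul
    (hc hp))).eventuallyEq_nhds_iff_eventuallyEq_nhdsNE continuousAt_const).1 hev |>.eq_of_nhds

/-- Let `D` be a domain in `ℂ` and `M` a maximal ideal of `H(D)`. If `f ∈ M` and `h ∈ H(D)`
is such that `Z_D(f) ⊆ Z_D(h)` (zero sets, disregarding multiplicities), then `h ∈ M`. -/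
theorem mem_of_zeroSet_subset {D : Set ℂ} (hD : IsOpen D) (hDconn : IsConnected D)
    (M : Ideal (Hol D)) (hM : M.IsMaximal)
    (f : Hol D) (hf : f ∈ M) (h : Hol D) (hZ : ZD f ⊆ ZD h) :
    h ∈ M := by
  by_contra hh
  obtain ⟨y, p, hp, hyp⟩ := hM.exists_inv hh
  have hypz : ∀ z : D, (y : D → ℂ) z * (h : D → ℂ) z + (p : D → ℂ) z = 1 := fun z =>
    congrFun (congrArg Subtype.val hyp) z
  obtain ⟨F, hF, hFf⟩ := f.2
  obtain ⟨pp, hpd, hpp⟩ := p.2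
  by_cases hne : ∃ z ∈ D, F z ≠ 0
  · obtain ⟨A, B, hA, hB, hAB⟩ := bezout D hD hDconn F pp hF hpd hne (by
      intro z hz h0
      have h1 : (⟨z, hz⟩ : D) ∈ ZD f := (hFf ⟨z, hz⟩).symm.trans h0
      have h2 : (h : D → ℂ) ⟨z, hz⟩ = 0 := hZ h1
      have h3 := hypz ⟨z, hz⟩
      rw [h2, ← hpp] at h3
      simp at h3
      rw [h3]; exact one_ne_zero)
    let AA : Hol D := ⟨fun z => A z, A, hA, fun _ => rfl⟩
    let BB : Hol D := ⟨fun z => B z, B, hB, fun _ => rfl⟩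
    have e : AA * f + BB * p = 1 := by
      apply Subtype.ext
      funext z
      have := hAB z z.2
      rw [hFf, hpp] at this
      exact this
    apply hM.ne_top
    rw [Ideal.eq_top_iff_one, ← e]
    exact M.add_mem (M.mul_mem_left _ hf) (M.mul_mem_left _ hp)
  · push Not at hne
    apply hh
    have : h = 0 := by
      apply Subtype.ext
      funext z
      exact hZ (show (f : D → ℂ) z = 0 from (hFf z).symm.trans (hne z z.2))
    rw [this]; exact M.zero_mem
end

section
/- Let D be a domain in ℂ and let M be a free maximal ideal of H(D). Suppose f ∈ M, f ≠ 0, and the orders of the zeros of f tend to infinity, meaning: for every n ∈ ℕ there exists a finite subset K of Z_D(f) such that ord(f,ζ) > n for all ζ ∈ Z_D(f) \ K. Then f ∈ ki(M) := ⋂_{n=1}^∞ Mⁿ. -/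
set_option synthInstance.maxHeartbeats 400000
set_option maxHeartbeats 800000

open Filter Topology

namespace KiAux

lemma compact_core (D : Set ℂ) (r e : ℝ) (he : 0 < e) :
    IsCompact {z : ℂ | ‖z‖ ≤ r ∧ ∀ γ ∉ D, e ≤ dist z γ} ∧
      {z : ℂ | ‖z‖ ≤ r ∧ ∀ γ ∉ D, e ≤ dist z γ} ⊆ D := by
  constructor
  · apply (isCompact_closedBall (0 : ℂ) r).of_isClosed_subset
    · have h1 : IsClosed {z : ℂ | ‖z‖ ≤ r} := isClosed_le continuous_norm continuous_const
      have h2 : IsClosed {z : ℂ | ∀ γ ∉ D, e ≤ dist z γ} := by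
        simp only [Set.ofPred_forall]
        refine isClosed_iInter fun γ => isClosed_iInter fun _ => ?_
        exact isClosed_le continuous_const (by fun_prop)
      exact h1.inter h2
    · intro z hz
      simpa using hz.1
  · intro z hz
    by_contra hzD
    have := hz.2 z hzD
    simp at this
    linarith

lemma exists_one (D : Set ℂ) (hD : IsOpen D) (α : ℂ) :
    ∃ u v : ℂ → ℂ, DifferentiableOn ℂ u D ∧ DifferentiableOn ℂ v D ∧
      (∀ z ∈ D, v z ≠ 0 ∧ 1 - u z = (z - α) * v z) ∧
      ((∃ β ∉ D, (∀ γ ∉ D, dist α β ≤ dist α γ) ∧ ‖α‖ * dist α β < 1 ∧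
          ∀ z, ‖u z‖ = dist α β / dist z β) ∨
       ((∀ γ ∉ D, 1 ≤ ‖α‖ * dist α γ) ∧ α ≠ 0 ∧ ∀ z, ‖u z‖ = ‖z‖ / ‖α‖) ∨ α = 0) := by
  by_cases h0 : α = 0
  · refine ⟨fun z => 1 - z, fun _ => 1, by fun_prop, by fun_prop, ?_, Or.inr (Or.inr h0)⟩
    intro z _
    simp [h0]
  by_cases h : ∃ γ ∉ D, ‖α‖ * dist α γ < 1
  · obtain ⟨γ, hγ, hlt⟩ := h
    obtain ⟨β, hβ, hβ'⟩ := hD.isClosed_compl.exists_infDist_eq_dist ⟨γ, hγ⟩ α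
    have hmin : ∀ γ ∉ D, dist α β ≤ dist α γ := fun γ hγ => by
      rw [← hβ']; exact Metric.infDist_le_dist_of_mem hγ
    have hne : ∀ z ∈ D, z - β ≠ 0 := fun z hz h => hβ (by rw [← sub_eq_zero.mp h]; exact hz)
    refine ⟨fun z => (α - β) / (z - β), fun z => 1 / (z - β), ?_, ?_, ?_,
      Or.inl ⟨β, hβ, hmin, ?_, ?_⟩⟩
    · exact DifferentiableOn.div (by fun_prop) (by fun_prop) hne
    · exact DifferentiableOn.div (by fun_prop) (by fun_prop) hne
    · intro z hz
      have := hne z hz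
      refine ⟨by simpa using this, ?_⟩
      field_simp
      ring
    · exact lt_of_le_of_lt (mul_le_mul_of_nonneg_left (hmin γ hγ) (norm_nonneg _)) hlt
    · intro z
      simp [dist_eq_norm]
  · push Not at h
    refine ⟨fun z => z / α, fun z => - 1 / α, by fun_prop, by fun_prop, ?_,
      Or.inr (Or.inl ⟨h, h0, ?_⟩)⟩
    · intro z hz
      refine ⟨by simpa using h0, ?_⟩
      field_simp
      ring
    · intro z
      simp

lemma exists_u (D : Set ℂ) (hD : IsOpen D) (S : Set ℂ)
    (hS : ∀ C ⊆ D, IsCompact C → (C ∩ S).Finite) :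
    ∃ u v : S → ℂ → ℂ, (∀ α : S, DifferentiableOn ℂ (u α) D ∧ DifferentiableOn ℂ (v α) D ∧
      ∀ z ∈ D, v α z ≠ 0 ∧ 1 - u α z = (z - α) * v α z) ∧
      ∀ C ⊆ D, IsCompact C → ∀ᶠ α in cofinite, ∀ z ∈ C, ‖u α z‖ ≤ 1 / 2 := by
  choose u v h1 h2 h3 h4 using fun α : S => exists_one D hD α
  refine ⟨u, v, fun α => ⟨h1 α, h2 α, h3 α⟩, ?_⟩
  intro C hCD hC
  obtain ⟨d, hd, hdC⟩ := hC.exists_thickening_subset_open hD hCD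
  obtain ⟨R, hR0, hR⟩ := hC.isBounded.exists_pos_norm_le
  have hdist : ∀ z ∈ C, ∀ γ ∉ D, d ≤ dist z γ := by
    intro z hz γ hγ
    by_contra hlt
    push Not at hlt
    exact hγ (hdC (Metric.mem_thickening_iff.mpr ⟨z, hz, by rwa [dist_comm]⟩))
  obtain ⟨c1, s1⟩ := compact_core D (2 / d) (d / 2) (by positivity)
  obtain ⟨c2, s2⟩ := compact_core D (2 * R) (1 / (2 * R)) (by positivity)
  have hfin := ((hS _ s1 c1).union (hS _ s2 c2)).union (Set.finite_singleton (0 : ℂ))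
  have hfin' := hfin.preimage (f := ((↑) : S → ℂ)) Subtype.val_injective.injOn
  refine hfin'.subset ?_
  intro α hα
  simp only [Set.mem_compl_iff, Set.mem_ofPred_eq, not_forall, not_le] at hα
  obtain ⟨z, hz, hlt⟩ := hα
  rcases h4 α with ⟨β, hβ, hmin, hm, hu⟩ | ⟨hm, h0, hu⟩ | h0
  · left; left
    rw [hu z] at hlt
    have hdz := hdist z hz β hβ
    have hpos : 0 < dist z β := lt_of_lt_of_le hd hdz
    rw [lt_div_iff₀ hpos] at hlt
    have hb : d / 2 ≤ dist (α : ℂ) β := by linarith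
    refine ⟨⟨?_, fun γ hγ => hb.trans (hmin γ hγ)⟩, α.2⟩
    rw [le_div_iff₀ hd]
    nlinarith [norm_nonneg (α : ℂ)]
  · left; right
    rw [hu z] at hlt
    have hpos : 0 < ‖(α : ℂ)‖ := norm_pos_iff.mpr h0
    rw [lt_div_iff₀ hpos] at hlt
    have hz' := hR z hz
    have hb : ‖(α : ℂ)‖ ≤ 2 * R := by linarith
    refine ⟨⟨hb, fun γ hγ => ?_⟩, α.2⟩
    rw [div_le_iff₀ (by positivity)]
    nlinarith [hm γ hγ, dist_nonneg (x := (α : ℂ)) (y := γ)]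
  · right; exact h0

lemma exists_exp_factor (m : ℕ) (ε : ℝ) (hε : 0 < ε) :
    ∃ q : ℂ → ℂ, Differentiable ℂ q ∧
      ∀ u : ℂ, ‖u‖ ≤ 1 / 2 → ‖((1 - u) * Complex.exp (q u)) ^ m - 1‖ ≤ ε := by
  have ht : Tendsto (fun p : ℕ => (m : ℝ) * (2 * (1 / 2 : ℝ) ^ (p + 1))) atTop (𝓝 0) := by
    have := ((tendsto_pow_atTop_nhds_zero_of_lt_one (r := (1 / 2 : ℝ)) (by norm_num)
      (by norm_num)).comp (tendsto_add_atTop_nat 1)).const_mul ((m : ℝ) * 2)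
    simpa [mul_assoc, Function.comp_def] using this
  obtain ⟨p, hp⟩ := (ht.eventually_le_const
    (show (0 : ℝ) < min 1 (ε / 2) by positivity)).exists
  refine ⟨fun u => - Complex.logTaylor (p + 1) (-u), ?_, ?_⟩
  · unfold Complex.logTaylor
    fun_prop
  · intro u hu
    have h1 : (1 : ℂ) - u ≠ 0 := by
      intro h
      have : u = 1 := (sub_eq_zero.mp h).symm
      rw [this] at hu
      norm_num at hu
    have hlog := Complex.norm_log_sub_logTaylor_le p (z := -u) (by rw [norm_neg]; linarith)
    set L := Complex.log (1 + -u) - Complex.logTaylor (p + 1) (-u) with hL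
    have hE : ((1 - u) * Complex.exp (- Complex.logTaylor (p + 1) (-u))) ^ m
        = Complex.exp (m * L) := by
      rw [Complex.exp_nat_mul, hL, sub_eq_add_neg (Complex.log _), Complex.exp_add,
        ← sub_eq_add_neg 1 u, Complex.exp_log h1]
    have hLb : ‖L‖ ≤ 2 * (1 / 2 : ℝ) ^ (p + 1) := by
      refine hlog.trans ?_
      rw [norm_neg]
      have i1 : ‖u‖ ^ (p + 1) ≤ (1 / 2 : ℝ) ^ (p + 1) := by gcongr
      have i2 : (1 - ‖u‖)⁻¹ ≤ 2 := by
        rw [inv_le_comm₀ (by linarith) (by norm_num)]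
        linarith
      have i3 : 0 ≤ (1 - ‖u‖)⁻¹ := by
        apply inv_nonneg.mpr; linarith
      calc _ ≤ ‖u‖ ^ (p + 1) * (1 - ‖u‖)⁻¹ := div_le_self (by positivity)
              (by linarith [(Nat.cast_nonneg p : (0 : ℝ) ≤ p)])
        _ ≤ (1 / 2 : ℝ) ^ (p + 1) * 2 := by gcongr
        _ = _ := mul_comm _ _
    have hmL : ‖(m : ℂ) * L‖ ≤ min 1 (ε / 2) := by
      rw [norm_mul, Complex.norm_natCast]
      exact (mul_le_mul_of_nonneg_left hLb (Nat.cast_nonneg m)).trans hp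
    rw [hE]
    have := Complex.norm_exp_sub_one_le (hmL.trans (min_le_left _ _))
    have h2 := hmL.trans (min_le_right _ _)
    linarith

lemma countable_of_compact_finite (D : Set ℂ) (hD : IsOpen D) (S : Set ℂ) (hSD : S ⊆ D)
    (hS : ∀ C ⊆ D, IsCompact C → (C ∩ S).Finite) : S.Countable := by
  have : S ⊆ ⋃ n : ℕ, ({z : ℂ | ‖z‖ ≤ n ∧ ∀ γ ∉ D, 1 / ((n : ℝ) + 1) ≤ dist z γ} ∩ S) := by
    intro z hz
    obtain ⟨d, hd, hdC⟩ := Metric.isOpen_iff.mp hD z (hSD hz)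
    obtain ⟨n1, hn1⟩ := exists_nat_ge ‖z‖
    obtain ⟨n2, hn2⟩ := exists_nat_one_div_lt hd
    refine Set.mem_iUnion.mpr ⟨max n1 n2, ⟨?_, ?_⟩, hz⟩
    · exact hn1.trans (by simp)
    · intro γ hγ
      have h1 : d ≤ dist z γ := by
        by_contra h
        push Not at h
        exact hγ (hdC (by rwa [Metric.mem_ball, dist_comm]))
      refine le_trans ?_ (hn2.le.trans h1)
      apply one_div_le_one_div_of_le (by positivity)
      simp
  refine Set.Countable.mono this (Set.countable_iUnion fun n => ?_)
  obtain ⟨c, s⟩ := compact_core D n (1 / ((n : ℝ) + 1)) (by positivity)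
  exact (hS _ s c).countable

/-- The Weierstrass theorem on an arbitrary open set. -/
lemma weierstrass (D : Set ℂ) (hD : IsOpen D) (S : Set ℂ) (hSD : S ⊆ D)
    (hS : ∀ C ⊆ D, IsCompact C → (C ∩ S).Finite) (m : ℂ → ℕ) (hm : ∀ z ∉ S, m z = 0) :
    ∃ G : ℂ → ℂ, DifferentiableOn ℂ G D ∧ ∀ ζ ∈ D, ∃ c : ℂ → ℂ, DifferentiableOn ℂ c D ∧
      c ζ ≠ 0 ∧ ∀ z ∈ D, G z = (z - ζ) ^ m ζ * c z := by
  classical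
  have : Countable S := (countable_of_compact_finite D hD S hSD hS).to_subtype
  have := Encodable.ofCountable S
  obtain ⟨ε, hε, c0, hc0, -⟩ := posSumOfEncodable (ε := 1) one_pos S
  obtain ⟨u, v, huv, hu⟩ := exists_u D hD S hS
  choose q hq hqb using fun α : S => exists_exp_factor (m α) (ε α) (hε α)
  set w : S → ℂ → ℂ := fun α z => (v α z * Complex.exp (q α (u α z))) ^ m α with hw
  set F : S → ℂ → ℂ := fun α z => ((1 - u α z) * Complex.exp (q α (u α z))) ^ m α with hF
  have hwd : ∀ α, DifferentiableOn ℂ (w α) D := fun α =>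
    ((huv α).2.1.mul (((hq α).comp_differentiableOn (huv α).1).cexp)).pow _
  have hFd : ∀ α, DifferentiableOn ℂ (F α) D := fun α =>
    (((differentiableOn_const 1).sub (huv α).1).mul
      (((hq α).comp_differentiableOn (huv α).1).cexp)).pow _
  have hw0 : ∀ α, ∀ z ∈ D, w α z ≠ 0 := fun α z hz =>
    pow_ne_zero _ (mul_ne_zero ((huv α).2.2 z hz).1 (Complex.exp_ne_zero _))
  have hFw : ∀ α : S, ∀ z ∈ D, F α z = (z - α) ^ m α * w α z := fun α z hz => by
    simp only [hF, hw]
    rw [((huv α).2.2 z hz).2, mul_assoc, mul_pow]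
  have hF0 : ∀ α : S, ∀ z ∈ D, z ≠ α → F α z ≠ 0 := fun α z hz hne => by
    rw [hFw α z hz]
    exact mul_ne_zero (pow_ne_zero _ (sub_ne_zero.mpr hne)) (hw0 α z hz)
  -- general product lemma
  have key : ∀ T : Set S, ∀ P : S → ℂ → ℂ, P = (fun α z => if α ∈ T then 1 else F α z) →
      DifferentiableOn ℂ (fun z => ∏' α, P α z) D ∧ (∀ z ∈ D, Multipliable (fun α => P α z)) ∧
      ∀ z ∈ D, (∀ α : S, α ∉ T → z ≠ α) → ∏' α, P α z ≠ 0 := by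
    intro T P hP
    have hPd : ∀ α, DifferentiableOn ℂ (P α) D := by
      intro α
      rw [hP]
      by_cases h : α ∈ T
      · simp [h]
      · simpa [h] using hFd α
    have hPb : ∀ C ⊆ D, IsCompact C → ∀ᶠ α in cofinite, ∀ z ∈ C, ‖P α z - 1‖ ≤ ε α := by
      intro C hCD hC
      filter_upwards [hu C hCD hC] with α hα z hz
      rw [hP]
      by_cases h : α ∈ T
      · simpa [h] using (hε α).le
      · simpa [h] using hqb α _ (hα z hz)
    have hloc : HasProdLocallyUniformlyOn P (fun z => ∏' α, P α z) D := by
      apply hasProdLocallyUniformlyOn_of_forall_compact hD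
      intro C hCD hC
      have := Summable.hasProdUniformlyOn_one_add (f := fun α z => P α z - 1) hC hc0.summable
        (hPb C hCD hC) (fun α => ((hPd α).continuousOn.mono hCD).sub continuousOn_const)
      simpa using this
    refine ⟨?_, fun z hz => (hloc.hasProd hz).multipliable, ?_⟩
    · refine TendstoLocallyUniformlyOn.differentiableOn hloc (Eventually.of_forall fun s => ?_) hD
      exact DifferentiableOn.fun_finsetProd fun α _ => hPd α
    · intro z hz hne
      have hs : Summable (fun α => ‖P α z - 1‖) := by
        refine hc0.summable.of_norm_bounded_eventually ?_
        filter_upwards [hPb {z} (by simpa using hz) isCompact_singleton] with α hα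
        simpa using hα z rfl
      have := tprod_one_add_ne_zero_of_summable (f := fun α => P α z - 1) (fun α => ?_) hs
      · simpa using this
      · rw [add_sub_cancel, hP]
        by_cases h : α ∈ T
        · simp [h]
        · simpa [h] using hF0 α z hz (hne α h)
  obtain ⟨hGd, hGm, hG0⟩ := key ∅ F (by simp)
  refine ⟨_, hGd, fun ζ hζ => ?_⟩
  by_cases hζS : ζ ∈ S
  · obtain ⟨hPd, hPm, hP0⟩ := key {⟨ζ, hζS⟩} _ rfl
    refine ⟨_, (hwd ⟨ζ, hζS⟩).mul hPd, mul_ne_zero (hw0 _ _ hζ) (hP0 ζ hζ ?_), ?_⟩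
    · intro α hα h
      exact hα (Subtype.ext h.symm)
    · intro z hz
      have h1 := hPm z hz
      have h2 := Multipliable.tprod_eq_mul_tprod_ite' (f := fun α => F α z) (⟨ζ, hζS⟩ : S) (by
        convert h1 using 1
        ext α
        simp [Function.update_apply])
      simp only [Pi.mul_apply]
      rw [h2, hFw _ z hz]
      simp [mul_assoc]
  · refine ⟨_, hGd, hG0 ζ hζ ?_, ?_⟩
    · intro α _ h
      exact hζS (h ▸ α.2)
    · intro z hz
      simp [hm ζ hζS]

end KiAux
namespace KiAux

lemma div_of_local (D : Set ℂ) (hD : IsOpen D) (F G : ℂ → ℂ)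
    (h : ∀ ζ ∈ D, ∃ (k : ℕ) (c d : ℂ → ℂ), AnalyticAt ℂ c ζ ∧ c ζ ≠ 0 ∧ AnalyticAt ℂ d ζ ∧
      (∀ᶠ z in 𝓝 ζ, G z = (z - ζ) ^ k * c z) ∧ ∀ᶠ z in 𝓝 ζ, F z = (z - ζ) ^ k * d z) :
    ∃ H : ℂ → ℂ, DifferentiableOn ℂ H D ∧ ∀ z ∈ D, F z = G z * H z := by
  choose! k c d hc hc0 hd hG hF using h
  have hcd : ∀ ζ ∈ D, ∀ᶠ z in 𝓝 ζ, c ζ z ≠ 0 ∧ F z = G z * (d ζ z / c ζ z) := by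
    intro ζ hζ
    filter_upwards [hG ζ hζ, hF ζ hζ, (hc ζ hζ).continuousAt.eventually_ne (hc0 ζ hζ)]
      with z h1 h2 h3
    refine ⟨h3, ?_⟩
    rw [h1, h2]
    field_simp
  refine ⟨fun ζ => d ζ ζ / c ζ ζ, fun ζ hζ => ?_, fun z hz => (hcd z hz).self_of_nhds.2⟩
  have han : AnalyticAt ℂ (fun z => d ζ z / c ζ z) ζ := (hd ζ hζ).div (hc ζ hζ) (hc0 ζ hζ)
  have heq : (fun z => d z z / c z z) =ᶠ[𝓝 ζ] fun z => d ζ z / c ζ z := by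
    filter_upwards [hG ζ hζ, hcd ζ hζ, hD.mem_nhds hζ] with z h1 h2 hz
    by_cases hzζ : z = ζ
    · rw [hzζ]
    · have hG0 : G z ≠ 0 := by
        rw [h1]
        exact mul_ne_zero (pow_ne_zero _ (sub_ne_zero.mpr hzζ)) h2.1
      exact mul_left_cancel₀ hG0 ((hcd z hz).self_of_nhds.2.symm.trans h2.2)
  exact (han.congr heq.symm).differentiableAt.differentiableWithinAt

/-- Element of `Hol D` from an ambient function. -/
def mkHol {D : Set ℂ} (F : ℂ → ℂ) (hF : DifferentiableOn ℂ F D) : Hol D :=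
  ⟨fun z => F z, F, hF, fun _ => rfl⟩

/-- The function `z - κ`. -/
def lin (D : Set ℂ) (κ : ℂ) : Hol D := mkHol (fun z => z - κ) (by fun_prop)

lemma lin_notMem {D : Set ℂ} (hD : IsOpen D) (M : Ideal (Hol D)) (hM : M.IsMaximal)
    (hfree : (⋂ g ∈ M, ZD g) = (∅ : Set D)) (κ : D) : lin D κ ∉ M := by
  intro hmem
  have : κ ∈ ⋂ g ∈ M, ZD g := by
    simp only [Set.mem_iInter]
    intro g hg
    obtain ⟨G, hG, hGg⟩ := g.2
    have hq : DifferentiableOn ℂ (dslope G κ) D :=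
      (Complex.differentiableOn_dslope (hD.mem_nhds κ.2)).mpr hG
    have hconst : mkHol (D := D) (fun _ => G κ) (by fun_prop) ∈ M := by
      have : mkHol (D := D) (fun _ => G κ) (by fun_prop) = g - lin D κ * mkHol _ hq := by
        ext z
        change G κ = (g : D → ℂ) z - ((z : ℂ) - κ) * dslope G κ z
        rw [← hGg z, ← smul_eq_mul, sub_smul_dslope]
        ring
      rw [this]
      exact M.sub_mem hg (M.mul_mem_right _ hmem)
    by_contra hne
    have hne' : G κ ≠ 0 := fun h => hne (by
      change (g : D → ℂ) κ = 0
      rw [← hGg κ, h])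
    apply hM.ne_top
    rw [Ideal.eq_top_iff_one]
    have h1 : (1 : Hol D) = mkHol (D := D) (fun _ => (G κ)⁻¹) (by fun_prop) *
        mkHol (D := D) (fun _ => G κ) (by fun_prop) := by
      ext z
      change (1 : ℂ) = (G κ)⁻¹ * G κ
      rw [inv_mul_cancel₀ hne']
    rw [h1]
    exact M.mul_mem_left _ hconst
  rw [hfree] at this
  exact this

lemma mem_pow {D : Set ℂ} (hD : IsOpen D) (hDconn : IsConnected D)
    (M : Ideal (Hol D)) (hM : M.IsMaximal)
    (hfree : (⋂ g ∈ M, ZD g) = (∅ : Set D))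
    (f : Hol D) (hfM : f ∈ M) (hf0 : f ≠ 0) (n : ℕ) (hn : 1 ≤ n)
    (hord : ∃ K : Set D, K.Finite ∧ K ⊆ ZD f ∧
      ∀ ζ ∈ ZD f \ K, ordGE f ζ (n + 1)) :
    f ∈ M ^ n := by
  classical
  obtain ⟨F, hF, hFf⟩ := f.2
  obtain ⟨K, hKfin, -, hK⟩ := hord
  have hFan : AnalyticOnNhd ℂ F D := hF.analyticOnNhd hD
  have hF0 : ¬ Set.EqOn F 0 D := by
    intro h
    apply hf0
    ext z
    rw [← hFf z]
    exact h z.2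
  -- local factorization
  have hfreq : ∀ ζ ∈ D, ¬ ∃ᶠ z in 𝓝[≠] ζ, F z = 0 := fun ζ hζ h =>
    hF0 (hFan.eqOn_zero_of_preconnected_of_frequently_eq_zero hDconn.isPreconnected hζ h)
  have hnt : ∀ ζ ∈ D, analyticOrderAt F ζ ≠ ⊤ := fun ζ hζ h => by
    rw [analyticOrderAt_eq_top] at h
    exact hfreq ζ hζ ((h.filter_mono nhdsWithin_le_nhds).frequently)
  have hloc : ∀ ζ ∈ D, ∃ a : ℂ → ℂ, AnalyticAt ℂ a ζ ∧ a ζ ≠ 0 ∧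
      ∀ᶠ z in 𝓝 ζ, F z = (z - ζ) ^ analyticOrderNatAt F ζ * a z := fun ζ hζ =>
    (hFan ζ hζ).analyticOrderAt_ne_top.mp (hnt ζ hζ)
  set S : Set ℂ := {z | z ∈ D ∧ F z = 0} with hSdef
  have hSfin : ∀ C ⊆ D, IsCompact C → (C ∩ S).Finite := by
    intro C hCD hC
    by_contra hinf
    obtain ⟨x, hx, hacc⟩ := Set.Infinite.exists_accPt_of_subset_isCompact hinf hC
      Set.inter_subset_left
    rw [accPt_iff_frequently_nhdsNE] at hacc
    exact hfreq x (hCD hx) (hacc.mono fun z hz => hz.2.2)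
  have ho0 : ∀ z ∈ D, z ∉ S → analyticOrderNatAt F z = 0 := by
    intro z hz hzS
    by_contra h
    exact hzS ⟨hz, apply_eq_zero_of_analyticOrderNatAt_ne_zero h⟩
  obtain ⟨G, hG, hGloc⟩ := weierstrass D hD S (fun z hz => hz.1) hSfin
    (fun z => if z ∈ S then analyticOrderNatAt F z / n else 0) (fun z hz => by simp [hz])
  have hGloc' : ∀ ζ ∈ D, ∃ c : ℂ → ℂ, AnalyticAt ℂ c ζ ∧
      c ζ ≠ 0 ∧ ∀ᶠ z in 𝓝 ζ, G z = (z - ζ) ^ (analyticOrderNatAt F ζ / n) * c z := by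
    intro ζ hζ
    obtain ⟨c, hc, hc0, h⟩ := hGloc ζ hζ
    refine ⟨c, hc.analyticAt (hD.mem_nhds hζ), hc0, ?_⟩
    filter_upwards [hD.mem_nhds hζ] with z hz
    rw [h z hz]
    by_cases hS : ζ ∈ S
    · simp [hS]
    · simp [hS, ho0 ζ hζ hS]
  -- `F = G ^ n * H`
  obtain ⟨H, hH, hFGH⟩ := div_of_local D hD F (fun z => G z ^ n) (by
    intro ζ hζ
    obtain ⟨a, ha, ha0, hFa⟩ := hloc ζ hζ
    obtain ⟨c, hc, hc0, hGc⟩ := hGloc' ζ hζ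
    set o := analyticOrderNatAt F ζ
    refine ⟨n * (o / n), fun z => c z ^ n, fun z => (z - ζ) ^ (o - n * (o / n)) * a z,
      hc.pow n, pow_ne_zero _ hc0, by fun_prop, ?_, ?_⟩
    · filter_upwards [hGc] with z hz
      rw [hz, mul_pow, ← pow_mul, mul_comm n]
    · filter_upwards [hFa] with z hz
      rw [hz, ← mul_assoc, ← pow_add, Nat.add_sub_cancel' (Nat.mul_div_le o n)])
  set κ : Finset ℂ := hKfin.toFinset.image (fun z : D => (z : ℂ)) with hκ
  obtain ⟨H2, hH2, hGFH⟩ := div_of_local D hD (fun z => G z ^ (2 * n) * ∏ x ∈ κ, (z - x) ^ n) F (by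
    intro ζ hζ
    obtain ⟨a, ha, ha0, hFa⟩ := hloc ζ hζ
    obtain ⟨c, hc, hc0, hGc⟩ := hGloc' ζ hζ
    obtain ⟨j, p, hp, hpe, hj⟩ : ∃ (j : ℕ) (p : ℂ → ℂ), AnalyticAt ℂ p ζ ∧
        (∀ z, ∏ x ∈ κ, (z - x) ^ n = (z - ζ) ^ j * p z) ∧
        analyticOrderNatAt F ζ ≤ analyticOrderNatAt F ζ / n * (2 * n) + j := by
      have hdm := Nat.div_add_mod (analyticOrderNatAt F ζ) n
      have hml := Nat.mod_lt (analyticOrderNatAt F ζ) hn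
      by_cases hζκ : ζ ∈ κ
      · refine ⟨n, fun z => ∏ x ∈ κ.erase ζ, (z - x) ^ n, ?_, ?_, ?_⟩
        · fun_prop
        · intro z
          rw [Finset.mul_prod_erase κ (fun x => (z - x) ^ n) hζκ]
        · nlinarith [Nat.zero_le (n * (analyticOrderNatAt F ζ / n))]
      · refine ⟨0, fun z => ∏ x ∈ κ, (z - x) ^ n, ?_, ?_, ?_⟩
        · fun_prop
        · simp
        · by_cases hS : ζ ∈ S
          · have hmem : (⟨ζ, hζ⟩ : D) ∈ ZD f \ K := by
              constructor
              · change (f : D → ℂ) ⟨ζ, hζ⟩ = 0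
                rw [← hFf]; exact hS.2
              · intro h
                apply hζκ
                rw [hκ, Finset.mem_image]
                exact ⟨⟨ζ, hζ⟩, by simpa using h, rfl⟩
            obtain ⟨g, hg⟩ := hK _ hmem
            obtain ⟨g', hg', hgg⟩ := g.2
            have hle : ((n + 1 : ℕ) : ℕ∞) ≤ analyticOrderAt F ζ := by
              rw [natCast_le_analyticOrderAt (hFan ζ hζ)]
              refine ⟨g', hg'.analyticAt (hD.mem_nhds hζ), ?_⟩
              filter_upwards [hD.mem_nhds hζ] with z hz
              rw [hFf ⟨z, hz⟩, hg ⟨z, hz⟩, ← hgg ⟨z, hz⟩, smul_eq_mul]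
            rw [← Nat.cast_analyticOrderNatAt (hnt ζ hζ)] at hle
            have hle' : n + 1 ≤ analyticOrderNatAt F ζ := by exact_mod_cast hle
            have h1 : 1 ≤ analyticOrderNatAt F ζ / n :=
              (Nat.one_le_div_iff hn).mpr (by omega)
            nlinarith
          · simp [ho0 ζ hζ hS]
    set o := analyticOrderNatAt F ζ
    refine ⟨o, a, fun z => (z - ζ) ^ (o / n * (2 * n) + j - o) * (c z ^ (2 * n) * p z),
      ha, ha0, by fun_prop, hFa, ?_⟩
    filter_upwards [hGc] with z hz
    rw [hz, hpe z, ← mul_assoc ((z - ζ) ^ o), ← pow_add, Nat.add_sub_cancel' hj, mul_pow,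
      ← pow_mul, pow_add]
    ring)
  set g : Hol D := mkHol G hG with hgdef
  have e1 : f = g ^ n * mkHol H hH := by
    ext z
    change (f : D → ℂ) z = G z ^ n * H z
    rw [← hFf z, hFGH z z.2]
  have e2 : g ^ (2 * n) * ∏ x ∈ κ, lin D x ^ n = f * mkHol H2 hH2 := by
    ext z
    have hprod : ((∏ x ∈ κ, lin D x ^ n : Hol D) : D → ℂ) z = ∏ x ∈ κ, ((z : ℂ) - x) ^ n := by
      rw [SubmonoidClass.coe_finsetProd, Finset.prod_apply]
      rfl
    change G z ^ (2 * n) * ((∏ x ∈ κ, lin D x ^ n : Hol D) : D → ℂ) z = (f : D → ℂ) z * H2 z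
    rw [hprod, ← hFf z]
    exact hGFH z z.2
  have hP := hM.isPrime
  have hgM : g ∈ M := by
    have hmem : g ^ (2 * n) * ∏ x ∈ κ, lin D x ^ n ∈ M := by
      rw [e2]; exact M.mul_mem_right _ hfM
    rcases hP.mem_or_mem hmem with h | h
    · exact hP.mem_of_pow_mem _ h
    · exfalso
      obtain ⟨x, hx, hxM⟩ := (Ideal.IsPrime.prod_mem_iff).mp h
      rw [hκ, Finset.mem_image] at hx
      obtain ⟨y, -, rfl⟩ := hx
      exact lin_notMem hD M hM hfree y (hP.mem_of_pow_mem _ hxM)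
  rw [e1]
  exact Ideal.mul_mem_right _ _ (Ideal.pow_mem_pow hgM n)

end KiAux

/-- Let `D` be a domain in `ℂ`, and `M` a free maximal ideal of `H(D)`. If `f ∈ M`, `f ≠ 0`,
and the orders of the zeros of `f` tend to infinity (for every `n` there is a finite set
`K ⊆ Z_D(f)` such that `ord(f,ζ) > n` for all `ζ ∈ Z_D(f) \ K`), then
`f ∈ ki(M) = ⋂_{n=1}^∞ Mⁿ`. -/
theorem mem_ki_of_orders_tendsto_infty {D : Set ℂ} (hD : IsOpen D) (hDconn : IsConnected D)
    (M : Ideal (Hol D)) (hM : M.IsMaximal)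
    (hfree : (⋂ g ∈ M, ZD g) = (∅ : Set D))
    (f : Hol D) (hfM : f ∈ M) (hf0 : f ≠ 0)
    (hord : ∀ n : ℕ, ∃ K : Set D, K.Finite ∧ K ⊆ ZD f ∧
      ∀ ζ ∈ ZD f \ K, ordGE f ζ (n + 1)) :
    f ∈ ki M := by

  simp only [ki, Ideal.mem_iInf]
  exact fun n hn => KiAux.mem_pow hD hDconn M hM hfree f hfM hf0 n hn (hord n)
end

section
/- Let D be a domain in ℂ and let M be a maximal ideal of H(D). Then ki(M) := ⋂_{n=1}^∞ Mⁿ = {0} if and only if there exists ζ ∈ D such that M = {f ∈ H(D) : f(ζ) = 0}, i.e., M is the (principal, fixed) ideal generated by the function z ↦ z − ζ. -/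
set_option synthInstance.maxHeartbeats 400000
set_option maxHeartbeats 800000

open Filter Topology Set in
lemma aux_prod_hol {D : Set ℂ} (hD : IsOpen D) {ι : Type} (F : ι → ℂ → ℂ) (c : ι → ℝ)
    (hc : Summable c) (hF : ∀ i, DifferentiableOn ℂ (F i) D)
    (hb : ∀ K ⊆ D, IsCompact K → ∀ᶠ i in cofinite, ∀ x ∈ K, ‖F i x‖ ≤ c i) :
    DifferentiableOn ℂ (fun z => ∏' i, (1 + F i z)) D ∧ ∀ z ∈ D, Summable (fun i => ‖F i z‖) := by
  constructor
  · have h : HasProdLocallyUniformlyOn (fun i x ↦ 1 + F i x) (fun x ↦ ∏' i, (1 + F i x)) D := by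
      apply hasProdLocallyUniformlyOn_of_forall_compact hD
      intro K hK hKc
      exact Summable.hasProdUniformlyOn_one_add hKc hc (hb K hK hKc)
        fun i => ((hF i).mono hK).continuousOn
    have h2 := hasProdLocallyUniformlyOn_iff_tendstoLocallyUniformlyOn.1 h
    refine h2.differentiableOn (Eventually.of_forall fun s => ?_) hD
    exact DifferentiableOn.fun_finsetProd fun i _ => (differentiableOn_const 1).add (hF i)
  · intro z hz
    refine hc.of_norm_bounded_eventually ?_
    filter_upwards [hb {z} (by simpa using hz) isCompact_singleton] with i hi
    simpa using hi z rfl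

def auxC (D : Set ℂ) (R ε : ℝ) : Set ℂ := {a | ‖a‖ ≤ R ∧ ∀ b ∉ D, ε ≤ ‖a - b‖}

lemma auxC_sub {D : Set ℂ} {R ε : ℝ} (hε : 0 < ε) : auxC D R ε ⊆ D := by
  intro a ha
  by_contra h
  have := ha.2 a h
  simp at this
  linarith

lemma auxC_compact (D : Set ℂ) (R ε : ℝ) : IsCompact (auxC D R ε) := by
  apply Metric.isCompact_of_isClosed_isBounded
  · have : auxC D R ε = {a | ‖a‖ ≤ R} ∩ ⋂ b ∈ Dᶜ, {a | ε ≤ ‖a - b‖} := by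
      ext a; simp [auxC]
    rw [this]
    refine (isClosed_le (by fun_prop) (by fun_prop)).inter ?_
    exact isClosed_biInter fun b _ => isClosed_le (by fun_prop) (by fun_prop)
  · refine (Metric.isBounded_closedBall (x := (0:ℂ)) (r := R)).subset ?_
    intro a ha
    simpa using ha.1

lemma auxC_exhaust {D : Set ℂ} (hD : IsOpen D) {K : Set ℂ} (hK : IsCompact K) (hKD : K ⊆ D) :
    ∃ R ε : ℝ, 0 < R ∧ 0 < ε ∧ K ⊆ auxC D R ε := by
  obtain ⟨R, hR0, hR⟩ := hK.isBounded.exists_pos_norm_le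
  obtain ⟨ε, hε, h⟩ := hK.exists_thickening_subset_open hD hKD
  refine ⟨R, ε, hR0, hε, fun a ha => ⟨hR a ha, fun b hb => ?_⟩⟩
  by_contra hlt
  push Not at hlt
  apply hb
  apply h
  rw [Metric.mem_thickening_iff]
  exact ⟨a, ha, by rwa [dist_comm, dist_eq_norm]⟩

lemma aux_u {D : Set ℂ} (hD : IsOpen D) {a : ℂ} (ha : a ∈ D) (ha0 : a ≠ 0) :
    ∃ u : ℂ → ℂ, DifferentiableOn ℂ u D ∧ u a = 1 ∧ ∀ R ε : ℝ, 0 < R → 0 < ε →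
      ∀ z ∈ auxC D R ε, 1 / 4 < ‖u z‖ →
        a ∈ auxC D (4 * R + 4 / ε) (min (ε / 4) (1 / (4 * R))) := by
  have hna : 0 < ‖a‖ := norm_pos_iff.2 ha0
  by_cases h : ∃ b ∉ D, ‖a - b‖ * ‖a‖ < 1
  · obtain ⟨b, hb, hab⟩ := h
    obtain ⟨b0, hb0, hbd⟩ := (isClosed_compl_iff.2 hD).exists_infDist_eq_dist ⟨b, hb⟩ a
    have hmin : ∀ b' ∉ D, ‖a - b0‖ ≤ ‖a - b'‖ := by
      intro b' hb'
      rw [← dist_eq_norm, ← dist_eq_norm, ← hbd]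
      exact Metric.infDist_le_dist_of_mem hb'
    have hne : ∀ z ∈ D, z - b0 ≠ 0 := by
      intro z hz h0
      exact hb0 (sub_eq_zero.1 h0 ▸ hz)
    refine ⟨fun z => (a - b0) / (z - b0), ?_, ?_, ?_⟩
    · exact DifferentiableOn.div (by fun_prop) (by fun_prop) hne
    · exact div_self (hne a ha)
    · intro R ε hR hε z hz hu
      have hzb := hz.2 b0 hb0
      have hzp : 0 < ‖z - b0‖ := lt_of_lt_of_le hε hzb
      rw [norm_div, lt_div_iff₀ hzp] at hu
      have h1 : ε / 4 < ‖a - b0‖ := by linarith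
      refine ⟨?_, fun b' hb' => (min_le_left _ _).trans (h1.le.trans (hmin b' hb'))⟩
      have h2 : ‖a - b0‖ * ‖a‖ < 1 :=
        lt_of_le_of_lt (mul_le_mul_of_nonneg_right (hmin b hb) hna.le) hab
      have h3 : ‖a‖ ≤ 4 / ε := by
        rw [le_div_iff₀ hε]
        nlinarith
      linarith
  · push Not at h
    refine ⟨fun z => z / a, by fun_prop, div_self ha0, ?_⟩
    intro R ε hR hε z hz hu
    rw [norm_div, lt_div_iff₀ hna] at hu
    have h1 : ‖a‖ ≤ 4 * R := by linarith [hz.1]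
    refine ⟨by have := div_pos (show (0:ℝ) < 4 by norm_num) hε; linarith, fun b' hb' => ?_⟩
    refine (min_le_right _ _).trans ?_
    rw [div_le_iff₀ (by positivity)]
    exact (h b' hb').trans (mul_le_mul_of_nonneg_left h1 (norm_nonneg _))

lemma aux_pow_bound' (x : ℂ) (hx : ‖x‖ ≤ 1) (N : ℕ) :
    ‖(1 - x) ^ N - 1‖ ≤ (2 ^ N - 1) * ‖x‖ := by
  induction N with
  | zero => simp
  | succ N ih =>
    have h1 : ‖1 - x‖ ≤ 2 := (norm_sub_le _ _).trans (by rw [norm_one]; linarith)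
    have : (1 - x) ^ (N + 1) - 1 = ((1 - x) ^ N - 1) * (1 - x) - x := by ring
    rw [this]
    have h2 : (1:ℝ) ≤ 2 ^ N := one_le_pow₀ (by norm_num)
    have hx0 := norm_nonneg x
    calc ‖((1 - x) ^ N - 1) * (1 - x) - x‖
        ≤ ‖(1 - x) ^ N - 1‖ * ‖1 - x‖ + ‖x‖ := by
          rw [← norm_mul]; exact norm_sub_le _ _
      _ ≤ ((2 ^ N - 1) * ‖x‖) * 2 + ‖x‖ := by gcongr
      _ = (2 ^ (N + 1) - 1) * ‖x‖ := by ring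

lemma aux_pow_bound (x : ℂ) (hx : ‖x‖ ≤ 1) (N : ℕ) : ‖(1 - x) ^ N - 1‖ ≤ 2 ^ N * ‖x‖ := by
  have := aux_pow_bound' x hx N
  have := norm_nonneg x
  linarith

open Filter Topology Set in
lemma aux_divides {D : Set ℂ} (hD : IsOpen D) (F G : ℂ → ℂ)
    (hF : ∀ a ∈ D, ∀ᶠ z in 𝓝[≠] a, F z ≠ 0)
    (h : ∀ a ∈ D, ∃ g, AnalyticAt ℂ g a ∧ ∀ᶠ z in 𝓝 a, G z = F z * g z) :
    ∃ Q, DifferentiableOn ℂ Q D ∧ ∀ z ∈ D, G z = F z * Q z := by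
  choose! g hg hgG using h
  refine ⟨fun z => g z z, ?_, fun z hz => (hgG z hz).self_of_nhds⟩
  intro a ha
  have : (fun z => g z z) =ᶠ[𝓝 a] g a := by
    have h1 := eventually_nhdsWithin_iff.1 (hF a ha)
    filter_upwards [h1, hgG a ha, hD.mem_nhds ha] with z hz1 hz2 hzD
    by_cases hza : z = a
    · rw [hza]
    · have h3 := (hgG z hzD).self_of_nhds
      rw [hz2] at h3
      exact (mul_left_cancel₀ (hz1 hza) h3).symm
  exact (((hg a ha).congr this.symm).differentiableAt).differentiableWithinAt

lemma aux_factor {D : Set ℂ} (hD : IsOpen D) {a : ℂ} (ha : a ∈ D) {f : ℂ → ℂ}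
    (hf : DifferentiableOn ℂ f D) (h0 : f a = 0) :
    ∃ g, DifferentiableOn ℂ g D ∧ ∀ z, f z = (z - a) * g z := by
  refine ⟨dslope f a, (Complex.differentiableOn_dslope (hD.mem_nhds ha)).2 hf, fun z => ?_⟩
  have := sub_smul_dslope f a z
  rw [h0, sub_zero, smul_eq_mul] at this
  exact this.symm

open Filter Topology Set in
lemma aux_weier {D : Set ℂ} (hD : IsOpen D) (Z : Set ℂ) (hZD : Z ⊆ D)
    (hZ : ∀ K ⊆ D, IsCompact K → (Z ∩ K).Finite) (m : ℂ → ℕ) {z0 : ℂ} (hz0 : z0 ∈ D) :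
    ∃ h : ℂ → ℂ, DifferentiableOn ℂ h D ∧ h z0 ≠ 0 ∧ ∀ n : ℕ, ∃ E : Finset ℂ, (E : Set ℂ) ⊆ Z ∧
      ∀ a ∈ Z, a ∉ E → ∃ g, DifferentiableOn ℂ g D ∧ ∀ z ∈ D, h z = (z - a) ^ (n * m a) * g z := by
  classical
  -- countability
  have hcount : Z.Countable := by
    have : Z ⊆ ⋃ k : ℕ, (Z ∩ auxC D k (1 / (k + 1))) := by
      intro a ha
      obtain ⟨R, ε, hR, hε, hK⟩ := auxC_exhaust hD (isCompact_singleton (x := a))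
        (by simpa using hZD ha)
      obtain ⟨k1, hk1⟩ := exists_nat_ge R
      obtain ⟨k2, hk2⟩ := exists_nat_one_div_lt hε
      have haC := hK rfl
      refine mem_iUnion.2 ⟨max k1 k2, ha, haC.1.trans (hk1.trans (by simp)), fun b hb => ?_⟩
      refine le_trans ?_ (hk2.le.trans (haC.2 b hb))
      apply one_div_le_one_div_of_le (by positivity)
      simp
    refine (countable_iUnion fun k => (hZ _ (auxC_sub ?_) (auxC_compact _ _ _)).countable).mono this
    positivity
  have := hcount.to_subtype
  obtain ⟨κ, hκ⟩ := exists_injective_nat Z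
  have hu : ∀ a : Z, ∃ u : ℂ → ℂ, DifferentiableOn ℂ u D ∧ ((a : ℂ) ≠ 0 → u a = 1) ∧
      ∀ R ε : ℝ, 0 < R → 0 < ε → ∀ z ∈ auxC D R ε, 1 / 4 < ‖u z‖ →
        (a : ℂ) ∈ auxC D (4 * R + 4 / ε) (min (ε / 4) (1 / (4 * R))) := by
    intro a
    by_cases ha0 : (a : ℂ) = 0
    · refine ⟨fun _ => 0, by fun_prop, fun h => (h ha0).elim, ?_⟩
      intro R ε _ _ z _ h
      norm_num at h
    · obtain ⟨u, h1, h2, h3⟩ := aux_u hD (hZD a.2) ha0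
      exact ⟨u, h1, fun _ => h2, h3⟩
  choose u hud hu1 hub using hu
  have hsmall : ∀ K ⊆ D, IsCompact K → ∀ᶠ a in cofinite, ∀ x ∈ K, ‖u a x‖ ≤ 1 / 4 := by
    intro K hKD hK
    obtain ⟨R, ε, hR, hε, hKC⟩ := auxC_exhaust hD hK hKD
    have hfin := hZ _ (auxC_sub (R := 4 * R + 4 / ε)
      (show 0 < min (ε / 4) (1 / (4 * R)) by positivity)) (auxC_compact _ _ _)
    have hfin2 := hfin.preimage (f := ((↑) : Z → ℂ)) Subtype.val_injective.injOn
    refine hfin2.subset ?_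
    intro a ha
    simp only [mem_compl_iff, mem_ofPred_eq, not_forall, not_le] at ha
    obtain ⟨x, hx, hxu⟩ := ha
    exact ⟨a.2, hub a R ε hR hε x (hKC hx) hxu⟩
  -- exponents
  let S : Set Z := {a | (a : ℂ) ≠ 0 ∧ ‖u a z0‖ ≤ 1 / 4}
  have hS : Sᶜ.Finite := by
    have h1 := hsmall {z0} (by simpa using hz0) isCompact_singleton
    have h2 : ∀ᶠ a : Z in cofinite, (a : ℂ) ≠ 0 := by
      have : ({0} : Set ℂ).Finite := finite_singleton 0
      exact (this.preimage (f := ((↑) : Z → ℂ)) Subtype.val_injective.injOn).subset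
        (fun a ha => by simpa using ha)
    have h3 : ∀ᶠ a : Z in cofinite, a ∈ S := by
      filter_upwards [h1, h2] with a ha hb
      exact ⟨hb, ha z0 rfl⟩
    exact h3
  let N : Z → ℕ := fun a => if a ∈ S then κ a * m a else 0
  let F : Z → ℂ → ℂ := fun a z => (1 - u a z ^ (N a + κ a)) ^ N a - 1
  let c : Z → ℝ := fun a => (1 / 4 : ℝ) ^ κ a
  have hc : Summable c := by
    have : Summable (fun n : ℕ => (1 / 4 : ℝ) ^ n) :=
      summable_geometric_of_lt_one (by norm_num) (by norm_num)
    exact this.comp_injective hκ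
  have hFd : ∀ a, DifferentiableOn ℂ (F a) D := by
    intro a
    have := hud a
    fun_prop
  have hFle : ∀ a z, ‖u a z‖ ≤ 1 / 4 → ‖F a z‖ ≤ c a := by
    intro a z hz
    have hp : ‖u a z ^ (N a + κ a)‖ ≤ (1 / 4) ^ (N a + κ a) := by
      rw [norm_pow]
      exact pow_le_pow_left₀ (norm_nonneg _) hz _
    have h1 : ‖u a z ^ (N a + κ a)‖ ≤ 1 :=
      hp.trans (pow_le_one₀ (by norm_num) (by norm_num))
    refine (aux_pow_bound _ h1 _).trans ?_
    calc (2:ℝ) ^ N a * ‖u a z ^ (N a + κ a)‖ ≤ 2 ^ N a * (1 / 4) ^ (N a + κ a) := by gcongr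
      _ = (1 / 2) ^ N a * (1 / 4) ^ κ a := by
        rw [pow_add, ← mul_assoc, ← mul_pow]; norm_num
      _ ≤ 1 * (1 / 4) ^ κ a := by
        gcongr
        exact pow_le_one₀ (by norm_num) (by norm_num)
      _ = c a := one_mul _
  have hb : ∀ K ⊆ D, IsCompact K → ∀ᶠ i in cofinite, ∀ x ∈ K, ‖F i x‖ ≤ c i := by
    intro K h1 h2
    filter_upwards [hsmall K h1 h2] with a ha x hx
    exact hFle a x (ha x hx)
  obtain ⟨hhol, hsum⟩ := aux_prod_hol hD F c hc hFd hb
  refine ⟨_, hhol, ?_, ?_⟩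
  · refine tprod_one_add_ne_zero_of_summable ?_ (hsum z0 hz0)
    intro a
    simp only [F, add_sub_cancel]
    by_cases haS : a ∈ S
    · rcases Nat.eq_zero_or_pos (N a) with h0 | hpos
      · simp [h0]
      · apply pow_ne_zero
        intro h
        have h1 : ‖u a z0 ^ (N a + κ a)‖ < 1 := by
          rw [norm_pow]
          exact pow_lt_one₀ (norm_nonneg _) (lt_of_le_of_lt haS.2 (by norm_num)) (by omega)
        rw [← sub_eq_zero.1 h] at h1
        simp at h1
    · simp [N, haS]
  · intro n
    have hfin : (Sᶜ ∪ κ ⁻¹' {k | k < n}).Finite :=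
      hS.union ((finite_lt_nat n).preimage hκ.injOn)
    refine ⟨(hfin.image ((↑) : Z → ℂ)).toFinset, ?_, ?_⟩
    · intro a ha
      simp only [Finite.coe_toFinset, mem_image] at ha
      obtain ⟨x, _, rfl⟩ := ha
      exact x.2
    · intro a haZ haE
      have haE' : (⟨a, haZ⟩ : Z) ∉ Sᶜ ∪ κ ⁻¹' {k | k < n} := by
        intro h
        exact haE ((Finite.mem_toFinset _).2 ⟨_, h, rfl⟩)
      set α : Z := ⟨a, haZ⟩ with hα
      simp only [mem_union, mem_compl_iff, mem_preimage, mem_ofPred_eq, not_or, not_not,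
        not_lt] at haE'
      obtain ⟨haS, hn⟩ := haE'
      have hNα : N α = κ α * m a := if_pos haS
      by_cases hm : n * m a = 0
      · exact ⟨_, hhol, fun z _ => by rw [hm, pow_zero, one_mul]⟩
      have hle : n * m a ≤ N α := by rw [hNα]; exact Nat.mul_le_mul_right _ hn
      have hv : DifferentiableOn ℂ (fun z => 1 - u α z ^ (N α + κ α)) D := by
        have := hud α
        fun_prop
      obtain ⟨q, hq, hqe⟩ := aux_factor hD (hZD haZ) hv (by
        have := hu1 α haS.1
        simp only [hα] at this ⊢
        simp [this])
      obtain ⟨j, hj⟩ := Nat.exists_eq_add_of_le hle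
      let F' : Z → ℂ → ℂ := fun b => if b = α then 0 else F b
      have hF'd : ∀ b, DifferentiableOn ℂ (F' b) D := by
        intro b
        by_cases hbα : b = α
        · simp only [F', hbα, if_true]; exact differentiableOn_const 0
        · simp only [F', hbα, if_false]; exact hFd b
      have hb' : ∀ K ⊆ D, IsCompact K → ∀ᶠ i in cofinite, ∀ x ∈ K, ‖F' i x‖ ≤ c i := by
        intro K h1 h2
        filter_upwards [hb K h1 h2] with b hbb x hx
        by_cases hbα : b = α
        · simp only [F', hbα, if_true, c]; simp
        · simp only [F', hbα, if_false]; exact hbb x hx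
      obtain ⟨hhol', hsum'⟩ := aux_prod_hol hD F' c hc hF'd hb'
      refine ⟨fun z => ((z - a) ^ j * q z ^ N α) * ∏' b, (1 + F' b z), ?_, ?_⟩
      · refine DifferentiableOn.mul ?_ hhol'
        fun_prop
      · intro z hz
        have hmul := multipliable_one_add_of_summable (hsum' z hz)
        have heq : Function.update (fun b => 1 + F b z) α 1 = fun b => 1 + F' b z := by
          funext b
          by_cases hbα : b = α
          · simp [F', hbα]
          · simp [F', hbα]
        have hmul' : Multipliable (Function.update (fun b => 1 + F b z) α 1) := by
          rw [heq]; exact hmul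
        have hsp := Multipliable.tprod_eq_mul_tprod_ite' α hmul'
        have heq2 : (fun b => if b = α then 1 else 1 + F b z) = fun b => 1 + F' b z := by
          funext b
          by_cases hbα : b = α
          · simp [F', hbα]
          · simp [F', hbα]
        rw [heq2] at hsp
        simp only [] at hsp ⊢
        rw [hsp]
        have : 1 + F α z = ((z - a) * q z) ^ N α := by
          rw [← hqe z]; simp [F]
        rw [this, mul_pow]
        conv_lhs => rw [show (z - a) ^ N α = (z - a) ^ (n * m a) * (z - a) ^ j by rw [← pow_add, ← hj]]
        ring

def auxMk {D : Set ℂ} (F : ℂ → ℂ) (hF : DifferentiableOn ℂ F D) : Hol D :=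
  ⟨fun z => F z, F, hF, fun _ => rfl⟩

lemma auxMk_apply {D : Set ℂ} (F : ℂ → ℂ) (hF : DifferentiableOn ℂ F D) (z : D) :
    (auxMk F hF : D → ℂ) z = F z := rfl

lemma aux_exists_mk {D : Set ℂ} (f : Hol D) : ∃ F hF, f = auxMk F hF := by
  obtain ⟨f, F, hF, h⟩ := f
  refine ⟨F, hF, ?_⟩
  apply Subtype.ext
  funext z
  exact (h z).symm

def auxLin {D : Set ℂ} (ζ : ℂ) : Hol D := auxMk (fun z => z - ζ) (by fun_prop)

lemma aux_lin_dvd {D : Set ℂ} (hD : IsOpen D) (f : Hol D) (ζ : D) :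
    (f : D → ℂ) ζ = 0 ↔ (auxLin (ζ : ℂ) : Hol D) ∣ f := by
  constructor
  · intro h
    obtain ⟨F, hF, rfl⟩ := aux_exists_mk f
    obtain ⟨g, hg, hgf⟩ := aux_factor hD ζ.2 hF h
    refine ⟨auxMk g hg, ?_⟩
    apply Subtype.ext
    funext z
    exact hgf z
  · rintro ⟨g, rfl⟩
    change ((ζ : ℂ) - ζ) * (g : D → ℂ) ζ = 0
    simp

open Filter Topology Set in
lemma aux_forward {D : Set ℂ} (hD : IsOpen D) (hDconn : IsConnected D)
    (M : Ideal (Hol D)) (ζ : D) (h : ∀ f : Hol D, f ∈ M ↔ (f : D → ℂ) ζ = 0) : ki M = ⊥ := by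
  have hM : M = Ideal.span {(auxLin (ζ : ℂ) : Hol D)} := by
    ext f
    rw [h, Ideal.mem_span_singleton, aux_lin_dvd hD]
  rw [eq_bot_iff]
  intro f hf
  rw [Ideal.mem_bot]
  have hpow : ∀ n : ℕ, 1 ≤ n → (auxLin (ζ : ℂ) : Hol D) ^ n ∣ f := by
    intro n hn
    have : f ∈ M ^ n := by
      simp only [ki, Ideal.mem_iInf] at hf
      exact hf n hn
    rwa [hM, Ideal.span_singleton_pow, Ideal.mem_span_singleton] at this
  obtain ⟨F, hF, rfl⟩ := aux_exists_mk f
  have hFa : AnalyticOnNhd ℂ F D := hF.analyticOnNhd hD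
  have hev : ∀ᶠ z in 𝓝 (ζ : ℂ), F z = 0 := by
    by_contra hne
    obtain ⟨n, g, hg, hg0, hge⟩ := (hFa ζ ζ.2).exists_eventuallyEq_pow_smul_nonzero_iff.2 hne
    obtain ⟨q, hq⟩ := hpow (n + 1) (by omega)
    obtain ⟨Q, hQ, rfl⟩ := aux_exists_mk q
    have hFQ : ∀ z ∈ D, F z = (z - ζ) ^ (n + 1) * Q z := by
      intro z hz
      exact congrFun (congrArg Subtype.val hq) ⟨z, hz⟩
    have heq : ∀ᶠ z in 𝓝[≠] (ζ : ℂ), g z = (z - ζ) * Q z := by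
      rw [eventually_nhdsWithin_iff]
      filter_upwards [hge, hD.mem_nhds ζ.2] with z h1 hz hne
      rw [hFQ z hz, smul_eq_mul, pow_succ, mul_assoc] at h1
      exact (mul_left_cancel₀ (pow_ne_zero _ (sub_ne_zero.2 hne)) h1).symm
    have hQc : ContinuousAt Q ζ := (hQ.continuousOn).continuousAt (hD.mem_nhds ζ.2)
    have l1 : Tendsto g (𝓝[≠] (ζ : ℂ)) (𝓝 (g ζ)) :=
      hg.continuousAt.tendsto.mono_left nhdsWithin_le_nhds
    have l2 : Tendsto (fun z => (z - ζ) * Q z) (𝓝[≠] (ζ : ℂ)) (𝓝 (((ζ : ℂ) - ζ) * Q ζ)) := by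
      have : ContinuousAt (fun z => (z - ζ) * Q z) (ζ : ℂ) := by fun_prop
      exact this.tendsto.mono_left nhdsWithin_le_nhds
    have := tendsto_nhds_unique (l1.congr' heq) l2
    apply hg0
    rw [this]; simp
  have := hFa.eqOn_zero_of_preconnected_of_eventuallyEq_zero hDconn.isPreconnected ζ.2 hev
  apply Subtype.ext
  funext z
  exact this z.2

lemma aux_mem_pow {R : Type*} [CommRing R] (M : Ideal R) (hM : M.IsMaximal) {p h : R} (hp : p ∉ M)
    (n : ℕ) (hph : p * h ∈ M ^ n) : h ∈ M ^ n := by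
  obtain ⟨q, i, hi, hq⟩ := hM.exists_inv hp
  have h1 : IsCoprime p i := ⟨q, 1, by rw [one_mul]; exact hq⟩
  obtain ⟨x, y, hxy⟩ := h1.pow_right (n := n)
  have : h = x * (p * h) + y * h * i ^ n := by
    linear_combination (-h) * hxy
  rw [this]
  exact Ideal.add_mem _ (Ideal.mul_mem_left _ _ hph)
    (Ideal.mul_mem_left _ _ (Ideal.pow_mem_pow hi n))

open Filter Topology Set in
lemma aux_backward {D : Set ℂ} (hD : IsOpen D) (hDconn : IsConnected D)
    (M : Ideal (Hol D)) (hM : M.IsMaximal) (hlin : ∀ a ∈ D, (auxLin a : Hol D) ∉ M) :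
    ki M ≠ ⊥ := by
  classical
  obtain ⟨z1, hz1⟩ := hDconn.nonempty
  have hMbot : M ≠ ⊥ := by
    rintro rfl
    obtain ⟨q, i, hi, hq⟩ := hM.exists_inv (hlin z1 hz1)
    rw [Ideal.mem_bot] at hi
    rw [hi, add_zero] at hq
    have := congrFun (congrArg Subtype.val hq) ⟨z1, hz1⟩
    change (q : D → ℂ) ⟨z1, hz1⟩ * (z1 - z1) = 1 at this
    simp at this
  obtain ⟨f, hfM, hf0⟩ := Submodule.exists_mem_ne_zero_of_ne_bot hMbot
  obtain ⟨F, hF, rfl⟩ := aux_exists_mk f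
  have hFa : AnalyticOnNhd ℂ F D := hF.analyticOnNhd hD
  have hnz : ¬ EqOn F 0 D := by
    intro h
    apply hf0
    apply Subtype.ext
    funext z
    exact h z.2
  have hev : ∀ a ∈ D, ¬ ∀ᶠ z in 𝓝 a, F z = 0 := fun a ha h =>
    hnz (hFa.eqOn_zero_of_preconnected_of_eventuallyEq_zero hDconn.isPreconnected ha h)
  have hpn : ∀ a ∈ D, ∀ᶠ z in 𝓝[≠] a, F z ≠ 0 := fun a ha =>
    (hFa a ha).eventually_eq_zero_or_eventually_ne_zero.resolve_left (hev a ha)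
  have hloc : ∀ a ∈ D, ∃ (n : ℕ) (g : ℂ → ℂ), AnalyticAt ℂ g a ∧ g a ≠ 0 ∧
      ∀ᶠ z in 𝓝 a, F z = (z - a) ^ n • g z := fun a ha =>
    (hFa a ha).exists_eventuallyEq_pow_smul_nonzero_iff.2 (hev a ha)
  choose! m g hg hg0 hge using hloc
  let Z : Set ℂ := {z ∈ D | F z = 0}
  have hZ : ∀ K ⊆ D, IsCompact K → (Z ∩ K).Finite := by
    intro K hKD hK
    by_contra hinf
    obtain ⟨a, haK, hacc⟩ := Set.Infinite.exists_accPt_of_subset_isCompact hinf hK inter_subset_right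
    have := accPt_iff_frequently_nhdsNE.1 hacc
    exact this ((hpn a (hKD haK)).mono fun z hz hzZ => hz hzZ.1.2)
  obtain ⟨h, hh, hh0, hdiv⟩ := aux_weier hD Z (fun z hz => hz.1) hZ m hz1
  intro hbot
  have hmem : auxMk h hh ∈ ki M := by
    simp only [ki, Ideal.mem_iInf]
    intro n _
    obtain ⟨E, hEZ, hE⟩ := hdiv n
    let P : ℂ → ℂ := fun z => ∏ a ∈ E, (z - a) ^ (n * m a)
    have hP : DifferentiableOn ℂ P D := by
      have : Differentiable ℂ P := by
        apply Differentiable.fun_finsetProd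
        intro i _
        fun_prop
      exact this.differentiableOn
    have hPeq : auxMk P hP = ∏ a ∈ E, (auxLin a : Hol D) ^ (n * m a) := by
      apply Subtype.ext
      funext z
      rw [auxMk_apply]
      simp only [P, SubmonoidClass.coe_finsetProd, Finset.prod_apply]
      rfl
    have hPM : auxMk P hP ∉ M := by
      rw [hPeq, hM.isPrime.prod_mem_iff]
      rintro ⟨a, ha, hmem⟩
      exact hlin a (hEZ ha).1 (hM.isPrime.mem_of_pow_mem _ hmem)
    refine aux_mem_pow M hM hPM n ?_
    have hPh : ∀ a ∈ Z, ∃ q, DifferentiableOn ℂ q D ∧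
        ∀ z ∈ D, P z * h z = (z - a) ^ (n * m a) * q z := by
      intro a ha
      by_cases haE : a ∈ E
      · refine ⟨fun z => (∏ b ∈ E.erase a, (z - b) ^ (n * m b)) * h z, ?_, ?_⟩
        · refine DifferentiableOn.mul ?_ hh
          apply DifferentiableOn.fun_finsetProd
          intro i _
          fun_prop
        · intro z _
          rw [← mul_assoc]
          congr 1
          exact (Finset.mul_prod_erase E _ haE).symm
      · obtain ⟨q, hq, hqe⟩ := hE a ha haE
        refine ⟨fun z => P z * q z, hP.mul hq, fun z hz => ?_⟩
        rw [hqe z hz]; ring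
    obtain ⟨Q, hQ, hQe⟩ := aux_divides hD (fun z => F z ^ n) (fun z => P z * h z)
      (fun a ha => (hpn a ha).mono fun z hz => pow_ne_zero _ hz) (by
        intro a ha
        by_cases haZ : F a = 0
        · obtain ⟨q, hq, hqe⟩ := hPh a ⟨ha, haZ⟩
          refine ⟨fun z => q z / g a z ^ n, ?_, ?_⟩
          · exact (hq.analyticAt (hD.mem_nhds ha)).div ((hg a ha).pow n) (pow_ne_zero _ (hg0 a ha))
          · filter_upwards [hge a ha, hD.mem_nhds ha,
              (hg a ha).continuousAt.eventually_ne (hg0 a ha)] with z h1 hz h2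
            rw [hqe z hz, h1, smul_eq_mul, mul_pow, ← pow_mul, mul_comm (m a) n]
            field_simp
        · refine ⟨fun z => P z * h z / F z ^ n, ?_, ?_⟩
          · exact ((hP.mul hh).analyticAt (hD.mem_nhds ha)).div ((hFa a ha).pow n)
              (pow_ne_zero _ haZ)
          · filter_upwards [(hFa a ha).continuousAt.eventually_ne haZ] with z h2
            field_simp)
    have : auxMk P hP * auxMk h hh = auxMk F hF ^ n * auxMk Q hQ := by
      apply Subtype.ext
      funext z
      exact hQe z z.2
    rw [this]
    exact Ideal.mul_mem_right _ _ (Ideal.pow_mem_pow hfM n)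
  rw [hbot, Ideal.mem_bot] at hmem
  exact hh0 (congrFun (congrArg Subtype.val hmem) ⟨z1, hz1⟩)

/-- Let `D` be a domain in `ℂ` and `M` a maximal ideal of `H(D)`. Then
`ki(M) = ⋂_{n=1}^∞ Mⁿ = {0}` if and only if there exists `ζ ∈ D` such that
`M = {f ∈ H(D) : f(ζ) = 0}`. -/
theorem ki_eq_bot_iff_fixed_maximal {D : Set ℂ} (hD : IsOpen D) (hDconn : IsConnected D)
    (M : Ideal (Hol D)) (hM : M.IsMaximal) :
    ki M = ⊥ ↔ ∃ ζ : D, ∀ f : Hol D, f ∈ M ↔ (f : D → ℂ) ζ = 0 := by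
  constructor
  · intro hki
    by_contra hno
    refine aux_backward hD hDconn M hM (fun a ha hmem => hno ⟨⟨a, ha⟩, fun f => ?_⟩) hki
    rw [aux_lin_dvd hD]
    constructor
    · intro hf
      rw [← aux_lin_dvd hD]
      by_contra hne
      -- combine `f` and the linear function to a unit
      have hsub : (f - auxMk (fun _ => (f : D → ℂ) ⟨a, ha⟩) (differentiableOn_const _) : Hol D)
          ∈ M := by
        refine Ideal.mem_of_dvd M ((aux_lin_dvd hD _ ⟨a, ha⟩).1 ?_) hmem
        change (f : D → ℂ) ⟨a, ha⟩ - (f : D → ℂ) ⟨a, ha⟩ = 0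
        simp
      have hc := M.sub_mem hf hsub
      rw [sub_sub_cancel] at hc
      apply hM.ne_top
      rw [Ideal.eq_top_iff_one]
      have := M.mul_mem_left
        (auxMk (fun _ => ((f : D → ℂ) ⟨a, ha⟩)⁻¹) (differentiableOn_const _)) hc
      convert this using 1
      apply Subtype.ext
      funext z
      exact (inv_mul_cancel₀ hne).symm
    · intro hf
      exact Ideal.mem_of_dvd M hf hmem
  · rintro ⟨ζ, hζ⟩
    exact aux_forward hD hDconn M ζ hζ
end

section
/- Let D be a domain in ℂ and let P be a prime ideal in H(D). Then P is not maximal if and only if o(f) = ∞ for every f ∈ P, where o(f) := sup_{ζ ∈ Z_D(f)} ord(f,ζ) for f ≠ 0 and o(0) := ∞. -/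
set_option synthInstance.maxHeartbeats 400000
set_option maxHeartbeats 800000

/-- `oInf f` says `o(f) = ∞`, where `o(f) := sup_{ζ ∈ Z_D(f)} ord(f,ζ)` for `f ≠ 0` and
`o(0) := ∞`: either `f = 0`, or for every `n` there is a zero of `f` of order at least `n`. -/
def oInf {D : Set ℂ} (f : Hol D) : Prop :=
  f = 0 ∨ ∀ n : ℕ, ∃ ζ ∈ ZD f, ordGE f ζ n

open Filter Topology Set

/-- sum of holomorphic functions -/
lemma sum_holo {D : Set ℂ} (hD : IsOpen D) {ι : Type*} (f : ι → ℂ → ℂ) (ε : ι → ℝ)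
    (hε : Summable ε) (hf : ∀ i, DifferentiableOn ℂ (f i) D)
    (hb : ∀ K ⊆ D, IsCompact K → ∃ C : ℝ, ∀ᶠ i in cofinite, ∀ x ∈ K, ‖f i x‖ ≤ C * ε i) :
    DifferentiableOn ℂ (fun z => ∑' i, f i z) D := by
  have h : TendstoLocallyUniformlyOn (fun (t : Finset ι) z => ∑ i ∈ t, f i z)
      (fun z => ∑' i, f i z) atTop D := by
    rw [tendstoLocallyUniformlyOn_iff_forall_isCompact hD]
    intro K hK hKc
    obtain ⟨C, hC⟩ := hb K hK hKc
    exact tendstoUniformlyOn_tsum_of_cofinite_eventually (hε.mul_left C) hC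
  exact h.differentiableOn (Eventually.of_forall fun t =>
    DifferentiableOn.fun_sum fun i _ => hf i) hD

lemma prod_holo {D : Set ℂ} (hD : IsOpen D) {ι : Type*} (f : ι → ℂ → ℂ) (ε : ι → ℝ)
    (hε : Summable ε) (hf : ∀ i, DifferentiableOn ℂ (f i) D)
    (hb : ∀ K ⊆ D, IsCompact K → ∃ C : ℝ, ∀ᶠ i in cofinite, ∀ x ∈ K, ‖f i x‖ ≤ C * ε i) :
    DifferentiableOn ℂ (fun z => ∏' i, (1 + f i z)) D := by
  have h : TendstoLocallyUniformlyOn (fun (t : Finset ι) z => ∏ i ∈ t, (1 + f i z))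
      (fun z => ∏' i, (1 + f i z)) atTop D := by
    rw [tendstoLocallyUniformlyOn_iff_forall_isCompact hD]
    intro K hK hKc
    obtain ⟨C, hC⟩ := hb K hK hKc
    have := Summable.hasProdUniformlyOn_one_add hKc (hε.mul_left C) hC
      (fun i => (hf i).continuousOn.mono hK)
    exact hasProdUniformlyOn_iff_tendstoUniformlyOn.1 this
  exact h.differentiableOn (Eventually.of_forall fun t =>
    DifferentiableOn.fun_finsetProd fun i _ => (hf i).const_add 1) hD

lemma summable_pt {D : Set ℂ} {ι : Type*} (f : ι → ℂ → ℂ) (ε : ι → ℝ)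
    (hε : Summable ε)
    (hb : ∀ K ⊆ D, IsCompact K → ∃ C : ℝ, ∀ᶠ i in cofinite, ∀ x ∈ K, ‖f i x‖ ≤ C * ε i)
    {z : ℂ} (hz : z ∈ D) : Summable (fun i => ‖f i z‖) := by
  obtain ⟨C, hC⟩ := hb {z} (by simpa using hz) isCompact_singleton
  refine (hε.mul_left C).of_norm_bounded_eventually ?_
  filter_upwards [hC] with i hi
  simpa using hi z rfl

/-- elementary factor: simple zero at 1 only, close to 1 on the half disc -/
lemma exists_factor (ε : ℝ) (hε : 0 < ε) : ∃ E : ℂ → ℂ, Differentiable ℂ E ∧ E 1 = 0 ∧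
    deriv E 1 ≠ 0 ∧ (∀ t, E t = 0 → t = 1) ∧ ∀ t, ‖t‖ ≤ 1/2 → ‖E t - 1‖ ≤ ε := by
  obtain ⟨δ, hδ, hδε⟩ : ∃ δ > 0, ∀ w : ℂ, ‖w‖ < δ → ‖Complex.exp w - 1‖ < ε := by
    have := Metric.continuousAt_iff.1 (Complex.continuous_exp.continuousAt (x := 0)) ε hε
    simpa [dist_eq_norm] using this
  obtain ⟨n, hn⟩ := exists_pow_lt_of_lt_one hδ (show (1/2 : ℝ) < 1 by norm_num)
  have hdT : Differentiable ℂ (fun t : ℂ => -Complex.logTaylor (n + 1) (-t)) := by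
    unfold Complex.logTaylor; fun_prop
  have hdE : Differentiable ℂ
      (fun t : ℂ => (1 - t) * Complex.exp (-Complex.logTaylor (n + 1) (-t))) :=
    (differentiable_id.const_sub 1).mul hdT.cexp
  refine ⟨_, hdE, by simp, ?_, ?_, ?_⟩
  · have h1 : HasDerivAt (fun t : ℂ => 1 - t) (-1) 1 := by
      simpa using (hasDerivAt_id (1:ℂ)).const_sub 1
    have := (h1.mul (hdT.cexp 1).hasDerivAt).deriv
    change deriv (fun t : ℂ => (1 - t) * Complex.exp (-Complex.logTaylor (n + 1) (-t))) 1 = _ at this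
    rw [this]
    simp
  · intro t ht
    have := (mul_eq_zero.1 ht).resolve_right (Complex.exp_ne_zero _)
    exact (sub_eq_zero.1 this).symm
  · intro t ht
    have ht1 : ‖t‖ < 1 := by linarith
    have h1 : (1 : ℂ) - t ≠ 0 := by
      intro h
      rw [sub_eq_zero] at h
      rw [← h] at ht1; simp at ht1
    have hb := Complex.norm_log_one_sub_inv_add_logTaylor_neg_le n ht1
    have e : (1 - t) * Complex.exp (-Complex.logTaylor (n + 1) (-t)) =
        Complex.exp (-(Complex.log (1 - t)⁻¹ + Complex.logTaylor (n + 1) (-t))) := by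
      rw [neg_add, Complex.exp_add, Complex.exp_neg (Complex.log _),
        Complex.exp_log (inv_ne_zero h1), inv_inv]
    change ‖(1 - t) * Complex.exp (-Complex.logTaylor (n + 1) (-t)) - 1‖ ≤ ε
    rw [e]
    refine (hδε _ ?_).le
    rw [norm_neg]
    refine hb.trans_lt (lt_of_le_of_lt ?_ hn)
    have h2 : (1 - ‖t‖)⁻¹ ≤ 2 := by
      rw [inv_le_comm₀ (by linarith) (by norm_num)]; norm_num; linarith
    have h3 : ‖t‖ ^ (n+1) ≤ (1/2 : ℝ)^(n+1) := by gcongr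
    calc ‖t‖ ^ (n + 1) * (1 - ‖t‖)⁻¹ / (n + 1) ≤ ‖t‖ ^ (n + 1) * (1 - ‖t‖)⁻¹ := by
          apply div_le_self
          · have : 0 ≤ (1 - ‖t‖)⁻¹ := inv_nonneg.2 (by linarith)
            positivity
          · have : (0:ℝ) ≤ n := n.cast_nonneg
            linarith
      _ ≤ (1/2)^(n+1) * 2 := by gcongr
      _ = (1/2)^n := by ring

/-- localizing functions -/
lemma exists_local {D : Set ℂ} (hD : IsOpen D) : ∃ t : ℂ → ℂ → ℂ,
    (∀ a ∈ D, DifferentiableOn ℂ (t a) D ∧ t a a = 1 ∧ (∀ z ∈ D, t a z = 1 → z = a) ∧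
      deriv (t a) a ≠ 0 ∧ ∃ C > 0, ∀ z ∈ D, ‖t a z‖ ≤ 1/2 → C ≤ ‖z - a‖) ∧
    ∀ K ⊆ D, IsCompact K → ∃ K' ⊆ D, IsCompact K' ∧ ∀ a ∈ D, a ∉ K' → ∀ z ∈ K, ‖t a z‖ ≤ 1/2 := by
  have type1 : ∀ a : ℂ, a ≠ 0 → DifferentiableOn ℂ (fun z => z / a) D ∧ a / a = 1 ∧
      (∀ z ∈ D, z / a = 1 → z = a) ∧
      deriv (fun z : ℂ => z / a) a ≠ 0 ∧ ∃ C > 0, ∀ z ∈ D, ‖z / a‖ ≤ 1/2 → C ≤ ‖z - a‖ := by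
    intro a ha
    refine ⟨by fun_prop, div_self ha, fun z _ h => by rwa [div_eq_one_iff_eq ha] at h, ?_,
      ‖a‖/2, by positivity, ?_⟩
    · simp [ha]
    · intro z _ h
      rw [norm_div, div_le_iff₀ (by positivity)] at h
      have := norm_sub_norm_le a z
      rw [norm_sub_rev] at this
      linarith
  have type2 : ∀ a ∈ D, ∀ b ∉ D, DifferentiableOn ℂ (fun z => (a - b) / (z - b)) D ∧
      (a - b) / (a - b) = 1 ∧
      (∀ z ∈ D, (a - b) / (z - b) = 1 → z = a) ∧
      deriv (fun z : ℂ => (a - b) / (z - b)) a ≠ 0 ∧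
      ∃ C > 0, ∀ z ∈ D, ‖(a - b) / (z - b)‖ ≤ 1/2 → C ≤ ‖z - a‖ := by
    intro a ha b hb
    have hne : ∀ z ∈ D, z - b ≠ 0 := fun z hz h => hb (by rw [← sub_eq_zero.1 h]; exact hz)
    refine ⟨?_, div_self (hne a ha), ?_, ?_, ‖a - b‖, norm_pos_iff.2 (hne a ha), ?_⟩
    · exact (differentiableOn_const _).div (by fun_prop) hne
    · intro z hz h
      rw [div_eq_one_iff_eq (hne z hz)] at h
      exact (sub_left_injective h).symm
    · have h1 : HasDerivAt (fun z : ℂ => z - b) 1 a := (hasDerivAt_id a).sub_const b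
      have := ((hasDerivAt_const a (a - b)).div h1 (hne a ha)).deriv
      change deriv (fun z : ℂ => (a - b) / (z - b)) a = _ at this
      rw [this]
      have h3 := hne a ha
      have h4 : b - a ≠ 0 := fun h => h3 (by rw [← neg_sub, h, neg_zero])
      simp [h3, h4]
    · intro z hz h
      rw [norm_div, div_le_iff₀ (norm_pos_iff.2 (hne z hz))] at h
      have := norm_sub_norm_le (z - b) (a - b)
      rw [sub_sub_sub_cancel_right] at this
      linarith
  rcases (Dᶜ).eq_empty_or_nonempty with hE | hE
  · have hDu : D = univ := compl_empty_iff.1 hE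
    subst hDu
    refine ⟨fun a z => if a = 0 then 1 + z else z / a, ?_, ?_⟩
    · intro a _
      by_cases ha : a = 0
      · subst ha
        simp only [if_true]
        refine ⟨by fun_prop, by simp, by simp, ?_, 1/2, by norm_num, ?_⟩
        · simp
        · intro z _ h
          have := norm_sub_le (1 + z) z
          simp at this ⊢
          linarith
      · simp only [ha, if_false]
        exact type1 a ha
    · intro K _ hK
      obtain ⟨R, hR⟩ := hK.isBounded.exists_norm_le
      refine ⟨Metric.closedBall 0 (2 * |R|), subset_univ _, isCompact_closedBall _ _, ?_⟩
      intro a _ ha z hz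
      simp at ha
      have ha0 : a ≠ 0 := by
        rintro rfl
        simp at ha
        linarith [abs_nonneg R]
      have := hR z hz
      simp only [ha0, if_false]
      rw [norm_div, div_le_iff₀ (by positivity)]
      linarith [le_abs_self R]
  · have hcl : IsClosed Dᶜ := hD.isClosed_compl
    choose b hb hbd using fun a : ℂ => hcl.exists_infDist_eq_dist hE a
    set d : ℂ → ℝ := fun a => Metric.infDist a Dᶜ with hd
    have hdpos : ∀ a ∈ D, 0 < d a := fun a ha =>
      (hcl.notMem_iff_infDist_pos hE).1 (by simpa using ha)
    refine ⟨fun a z => if 1 ≤ ‖a‖ * d a then z / a else (a - b a) / (z - b a), ?_, ?_⟩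
    · intro a haD
      by_cases ha : 1 ≤ ‖a‖ * d a
      · simp only [ha, if_true]
        refine type1 a ?_
        rintro rfl
        norm_num at ha
      · simp only [ha, if_false]
        exact type2 a haD (b a) (hb a)
    · intro K hKD hK
      obtain ⟨R, hR⟩ := hK.isBounded.exists_norm_le
      obtain ⟨δ, hδ, hδK⟩ : ∃ δ > 0, ∀ z ∈ K, δ ≤ d z := by
        rcases K.eq_empty_or_nonempty with rfl | hne
        · exact ⟨1, one_pos, by simp⟩
        · obtain ⟨x, hx, hmin⟩ := hK.exists_isMinOn hne
            (Metric.continuous_infDist_pt (Dᶜ)).continuousOn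
          exact ⟨d x, hdpos x (hKD hx), fun z hz => hmin hz⟩
      set M : ℝ := 2 * |R| + 2 / δ + 1 with hM
      have hMpos : 0 < M := by positivity
      have hM1 : 2 * |R| ≤ M := by have : 0 < 2/δ := by positivity
                                   linarith
      have hM2 : 1 / M ≤ δ / 2 := by
        rw [div_le_div_iff₀ hMpos two_pos]
        have : δ * (2/δ) = 2 := by field_simp
        nlinarith [abs_nonneg R, mul_nonneg hδ.le (abs_nonneg R)]
      refine ⟨Metric.closedBall 0 M ∩ {a | 1 / M ≤ d a}, ?_, ?_, ?_⟩
      · rintro a ⟨_, ha⟩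
        by_contra hna
        have : d a = 0 := Metric.infDist_zero_of_mem hna
        have h0 : 0 < 1 / M := by positivity
        simp only [mem_ofPred_eq] at ha
        linarith
      · exact (isCompact_closedBall _ _).inter_right
          (isClosed_le continuous_const (Metric.continuous_infDist_pt _))
      · intro a haD ha z hz
        have hcase : M < ‖a‖ ∨ d a < 1 / M := by
          by_contra hcon
          push Not at hcon
          exact ha ⟨by simpa using hcon.1, hcon.2⟩
        have hda := hdpos a haD
        by_cases h1 : 1 ≤ ‖a‖ * d a
        · simp only [h1, if_true]
          have hMa : M ≤ ‖a‖ := by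
            rcases hcase with h | h
            · exact h.le
            · rw [lt_div_iff₀ hMpos] at h
              by_contra hlt
              push Not at hlt
              nlinarith
          rw [norm_div, div_le_iff₀ (by linarith)]
          linarith [hR z hz, le_abs_self R]
        · simp only [h1, if_false]
          push Not at h1
          have hdM : d a ≤ 1 / M := by
            rcases hcase with h | h
            · rw [le_div_iff₀ hMpos]; nlinarith
            · exact h.le
          have e1 : ‖a - b a‖ = d a := by rw [← dist_eq_norm, ← hbd]
          have e2 : d z ≤ ‖z - b a‖ := by
            rw [← dist_eq_norm]; exact Metric.infDist_le_dist_of_mem (hb a)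
          have := hδK z hz
          rw [norm_div, div_le_iff₀ (by linarith), e1]
          linarith

/-- all zeros in `D` are simple -/
def SimpZ (D : Set ℂ) (H : ℂ → ℂ) : Prop := ∀ z ∈ D, H z = 0 → deriv H z ≠ 0

lemma countable_of_locfin {D S : Set ℂ} (hD : IsOpen D) (hSD : S ⊆ D)
    (hS : ∀ K ⊆ D, IsCompact K → (S ∩ K).Finite) : S.Countable := by
  have : LocallyCompactSpace D := hD.locallyCompactSpace
  have h1 : IsSigmaCompact D := isSigmaCompact_iff_sigmaCompactSpace.2 inferInstance
  obtain ⟨K, hK, hKD⟩ := h1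
  have : S = ⋃ n, S ∩ K n := by
    rw [← inter_iUnion, hKD, inter_eq_left.2 hSD]
  rw [this]
  exact countable_iUnion fun n =>
    (hS (K n) (by rw [← hKD]; exact subset_iUnion K n) (hK n)).countable

lemma weierstrass {D S : Set ℂ} (hD : IsOpen D) (hSD : S ⊆ D)
    (hS : ∀ K ⊆ D, IsCompact K → (S ∩ K).Finite) :
    ∃ H : ℂ → ℂ, DifferentiableOn ℂ H D ∧ SimpZ D H ∧ ∀ z ∈ D, H z = 0 ↔ z ∈ S := by
  classical
  obtain ⟨ε, hε, c, hc, -⟩ := (countable_of_locfin hD hSD hS).exists_pos_hasSum_le one_pos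
  obtain ⟨t, ht, htK⟩ := exists_local hD
  choose E hEd hE1 hE' hE0 hEε using fun a : S => exists_factor (ε a) (hε a)
  set f : S → ℂ → ℂ := fun a z => E a (t a z) - 1 with hf
  have hfd : ∀ a, DifferentiableOn ℂ (f a) D := fun a =>
    (((hEd a).comp_differentiableOn (ht a (hSD a.2)).1)).sub_const 1
  have hcof : ∀ K ⊆ D, IsCompact K → ∀ᶠ a : S in cofinite, ∀ x ∈ K, ‖t a x‖ ≤ 1/2 := by
    intro K hK hKc
    obtain ⟨K', hK'D, hK'c, hK'⟩ := htK K hK hKc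
    have : (Subtype.val ⁻¹' (S ∩ K') : Set S).Finite :=
      (hS K' hK'D hK'c).preimage Subtype.val_injective.injOn
    filter_upwards [this.compl_mem_cofinite] with a ha
    exact hK' a (hSD a.2) (fun h => ha ⟨a.2, h⟩)
  have hb : ∀ K ⊆ D, IsCompact K →
      ∃ C : ℝ, ∀ᶠ i in cofinite, ∀ x ∈ K, ‖f i x‖ ≤ C * ε i := by
    intro K hK hKc
    refine ⟨1, ?_⟩
    filter_upwards [hcof K hK hKc] with a ha x hx
    rw [one_mul]
    exact hEε a _ (ha x hx)
  have hH := prod_holo hD f (fun a => ε a) hc.summable hfd hb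
  set H : ℂ → ℂ := fun z => ∏' i, (1 + f i z) with hHdef
  have hfz : ∀ a : S, ∀ z ∈ D, 1 + f a z = 0 → z = a := by
    intro a z hz h
    have h' : E a (t a z) = 0 := by simpa [hf] using h
    exact (ht a (hSD a.2)).2.2.1 z hz (hE0 a _ h')
  have hsplit : ∀ s : S, ∃ G : ℂ → ℂ, DifferentiableOn ℂ G D ∧ G s ≠ 0 ∧
      ∀ z ∈ D, H z = E s (t s z) * G z := by
    intro s
    set g : S → ℂ → ℂ := fun a z => if a = s then 0 else f a z with hg
    have hgd : ∀ a, DifferentiableOn ℂ (g a) D := by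
      intro a
      by_cases h : a = s
      · simp only [hg, h, if_true]; exact differentiableOn_const _
      · simp only [hg, h, if_false]; exact hfd a
    have hgb : ∀ K ⊆ D, IsCompact K →
        ∃ C : ℝ, ∀ᶠ i in cofinite, ∀ x ∈ K, ‖g i x‖ ≤ C * ε i := by
      intro K hK hKc
      obtain ⟨C, hC⟩ := hb K hK hKc
      refine ⟨C, ?_⟩
      filter_upwards [hC] with a ha x hx
      by_cases h : a = s
      · simp only [hg, h, if_true, norm_zero]
        subst h
        exact (norm_nonneg _).trans (ha x hx)
      · simp only [hg, h, if_false]; exact ha x hx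
    refine ⟨fun z => ∏' i, (1 + g i z), prod_holo hD g (fun a => ε a) hc.summable hgd hgb, ?_, ?_⟩
    · apply tprod_one_add_ne_zero_of_summable
      · intro a
        by_cases h : a = s
        · simp [hg, h]
        · simp only [hg, h, if_false]
          intro h0
          exact h (Subtype.ext (hfz a s (hSD s.2) h0).symm)
      · exact summable_pt g (fun a => ε a) hc.summable hgb (hSD s.2)
    · intro z hz
      have hm : Multipliable (fun i => 1 + g i z) :=
        multipliable_one_add_of_summable (summable_pt g (fun a => ε a) hc.summable hgb hz)
      have e1 : Function.update (fun i => 1 + f i z) s 1 = fun i => 1 + g i z := by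
        funext i
        by_cases h : i = s
        · subst h; simp [hg]
        · simp [hg, h]
      have := Multipliable.tprod_eq_mul_tprod_ite' (f := fun i => 1 + f i z) s (by rw [e1]; exact hm)
      rw [hHdef]
      simp only
      rw [this]
      congr 1
      · simp [hf]
      · refine tprod_congr fun i => ?_
        by_cases h : i = s <;> simp [hg, h]
  have hzero : ∀ z ∈ D, H z = 0 ↔ z ∈ S := by
    intro z hz
    constructor
    · intro h0
      by_contra hzS
      refine tprod_one_add_ne_zero_of_summable (f := fun i => f i z) (fun a h => ?_)
        (summable_pt f (fun a => ε a) hc.summable hb hz) h0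
      exact hzS (by rw [hfz a z hz h]; exact a.2)
    · intro hzS
      obtain ⟨G, _, _, h⟩ := hsplit ⟨z, hzS⟩
      rw [h z hz]
      simp only
      rw [(ht z hz).2.1, hE1, zero_mul]
  refine ⟨H, hH, ?_, hzero⟩
  intro z hz h0
  obtain ⟨G, hGd, hG0, h⟩ := hsplit ⟨z, (hzero z hz).1 h0⟩
  have hev : H =ᶠ[𝓝 z] fun w => E ⟨z, (hzero z hz).1 h0⟩ (t z w) * G w :=
    (hD.eventually_mem hz).mono fun w hw => h w hw
  rw [hev.deriv_eq]
  have ht1 := ((ht z hz).1.differentiableAt (hD.mem_nhds hz)).hasDerivAt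
  have hE2 := (hEd ⟨z, (hzero z hz).1 h0⟩ (t z z)).hasDerivAt
  have h3 := (hE2.comp z ht1).mul (hGd.differentiableAt (hD.mem_nhds hz)).hasDerivAt
  have h4 := h3.deriv
  change deriv (fun w => E ⟨z, (hzero z hz).1 h0⟩ (t z w) * G w) z = _ at h4
  rw [h4]
  simp only [Function.comp, (ht z hz).2.1, hE1, zero_mul, add_zero]
  exact mul_ne_zero (mul_ne_zero (hE' _) (ht z hz).2.2.2.1) hG0

lemma zeros_locfin {D : Set ℂ} (hD : IsOpen D) (hc : IsConnected D) {F : ℂ → ℂ}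
    (hF : DifferentiableOn ℂ F D) {x : ℂ} (hx : x ∈ D) (hx0 : F x ≠ 0) :
    ∀ K ⊆ D, IsCompact K → ({z | z ∈ D ∧ F z = 0} ∩ K).Finite := by
  intro K hK hKc
  have h := (hF.analyticOnNhd hD).preimage_zero_mem_codiscreteWithin hx0 hx hc
  have h2 := hKc.finite_sdiff_of_mem_codiscreteWithin (codiscreteWithin_mono hK h)
  refine h2.subset ?_
  rintro z ⟨hz, hzK⟩
  exact ⟨hzK, by simpa using hz.2⟩

lemma SimpZ.exists_ne {D : Set ℂ} (hD : IsOpen D) (hne : D.Nonempty) {H : ℂ → ℂ}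
    (hs : SimpZ D H) : ∃ x ∈ D, H x ≠ 0 := by
  by_contra hcon
  push Not at hcon
  obtain ⟨x, hx⟩ := hne
  refine hs x hx (hcon x hx) ?_
  have : H =ᶠ[𝓝 x] fun _ => 0 := (hD.eventually_mem hx).mono hcon
  rw [this.deriv_eq]; simp

lemma exists_div {D : Set ℂ} (hD : IsOpen D) {F H : ℂ → ℂ}
    (hF : DifferentiableOn ℂ F D) (hH : DifferentiableOn ℂ H D) (hs : SimpZ D H)
    (hz : ∀ z ∈ D, H z = 0 → F z = 0) :
    ∃ G : ℂ → ℂ, DifferentiableOn ℂ G D ∧ ∀ z ∈ D, F z = H z * G z := by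
  classical
  refine ⟨fun z => if H z = 0 then deriv F z / deriv H z else F z / H z, ?_, ?_⟩
  · intro a ha
    apply DifferentiableAt.differentiableWithinAt
    by_cases h0 : H a = 0
    · have hdF := ((Complex.differentiableOn_dslope (hD.mem_nhds ha)).2 hF).differentiableAt
        (hD.mem_nhds ha)
      have hdH := ((Complex.differentiableOn_dslope (hD.mem_nhds ha)).2 hH).differentiableAt
        (hD.mem_nhds ha)
      have hne : dslope H a a ≠ 0 := by rw [dslope_same]; exact hs a ha h0
      refine (hdF.div hdH hne).congr_of_eventuallyEq ?_
      filter_upwards [hdH.continuousAt.eventually_ne hne] with z hz1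
      by_cases hza : z = a
      · subst hza; simp [h0]
      · have hzs : z - a ≠ 0 := sub_ne_zero.2 hza
        rw [dslope_of_ne _ hza, slope_def_field, h0, sub_zero] at hz1
        have hHz : H z ≠ 0 := fun h => hz1 (by simp [h])
        rw [if_neg hHz]
        simp only [Pi.div_apply]
        rw [dslope_of_ne _ hza, dslope_of_ne _ hza, slope_def_field, slope_def_field, h0,
          hz a ha h0, sub_zero, sub_zero]
        field_simp
    · have hdF := hF.differentiableAt (hD.mem_nhds ha)
      have hdH := hH.differentiableAt (hD.mem_nhds ha)
      refine (hdF.div hdH h0).congr_of_eventuallyEq ?_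
      filter_upwards [hdH.continuousAt.eventually_ne h0] with z hz1
      simp [hz1]
  · intro z hzD
    by_cases h0 : H z = 0
    · simp [h0, hz z hzD h0]
    · simp only [h0, if_false]; field_simp

lemma interpolate {D : Set ℂ} (hD : IsOpen D) (hc : IsConnected D) {H : ℂ → ℂ}
    (hH : DifferentiableOn ℂ H D) (hs : SimpZ D H) (w : ℂ → ℂ) :
    ∃ u : ℂ → ℂ, DifferentiableOn ℂ u D ∧ ∀ a ∈ D, H a = 0 → u a = w a := by
  classical
  obtain ⟨x, hx, hx0⟩ := hs.exists_ne hD hc.nonempty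
  set S : Set ℂ := {z | z ∈ D ∧ H z = 0} with hSdef
  have hSD : S ⊆ D := fun z hz => hz.1
  have hS : ∀ K ⊆ D, IsCompact K → (S ∩ K).Finite := zeros_locfin hD hc hH hx hx0
  obtain ⟨ε, hε, c, hcs, -⟩ := (countable_of_locfin hD hSD hS).exists_pos_hasSum_le one_pos
  obtain ⟨t, ht, htK⟩ := exists_local hD
  choose C hCpos hC using fun a : S => (ht a (hSD a.2)).2.2.2.2
  set q : S → ℂ := fun a => w a / deriv H a with hq
  have hk : ∀ a : S, ∃ k : ℕ, ‖q a‖ / C a * (1/2) ^ k ≤ ε a := by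
    intro a
    have h0 : 0 ≤ ‖q a‖ / C a := div_nonneg (norm_nonneg _) (hCpos a).le
    obtain ⟨k, hk⟩ := exists_pow_lt_of_lt_one (y := (1/2 : ℝ))
      (show 0 < ε a / (‖q a‖ / C a + 1) by have := hε a; positivity) (by norm_num)
    refine ⟨k, ?_⟩
    rw [lt_div_iff₀ (by positivity)] at hk
    have : (0:ℝ) ≤ (1/2)^k := by positivity
    nlinarith
  choose k hk using hk
  set f : S → ℂ → ℂ := fun a z => q a * dslope H a z * t a z ^ k a with hf
  have hfd : ∀ a, DifferentiableOn ℂ (f a) D := fun a =>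
    (((Complex.differentiableOn_dslope (hD.mem_nhds (hSD a.2))).2 hH).const_mul (q a)).mul
      ((ht a (hSD a.2)).1.pow (k a))
  have hb : ∀ K ⊆ D, IsCompact K →
      ∃ C : ℝ, ∀ᶠ i in cofinite, ∀ x ∈ K, ‖f i x‖ ≤ C * ε i := by
    intro K hK hKc
    obtain ⟨M, hM⟩ := hKc.exists_bound_of_continuousOn (hH.continuousOn.mono hK)
    refine ⟨M, ?_⟩
    obtain ⟨K', hK'D, hK'c, hK'⟩ := htK K hK hKc
    have : (Subtype.val ⁻¹' (S ∩ K') : Set S).Finite :=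
      (hS K' hK'D hK'c).preimage Subtype.val_injective.injOn
    filter_upwards [this.compl_mem_cofinite] with a ha z hz
    have htz : ‖t a z‖ ≤ 1/2 := hK' a (hSD a.2) (fun h => ha ⟨a.2, h⟩) z hz
    have hCz := hC a z (hK hz) htz
    have hCp := hCpos a
    have hza : z ≠ a := by
      rintro rfl
      simp at hCz; linarith
    have hMz := hM z hz
    have hds : ‖dslope H a z‖ ≤ M / C a := by
      rw [dslope_of_ne _ hza, slope_def_field, a.2.2, sub_zero, norm_div]
      exact div_le_div₀ ((norm_nonneg _).trans hMz) hMz hCp hCz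
    have hM0 : 0 ≤ M := (norm_nonneg _).trans hMz
    calc ‖f a z‖ = ‖q a‖ * ‖dslope H a z‖ * ‖t a z‖ ^ k a := by simp [hf]
      _ ≤ ‖q a‖ * (M / C a) * (1/2) ^ k a := by gcongr
      _ = M * (‖q a‖ / C a * (1/2) ^ k a) := by ring
      _ ≤ M * ε a := by gcongr; exact hk a
  refine ⟨_, sum_holo hD f (fun a => ε a) hcs.summable hfd hb, ?_⟩
  intro a ha h0
  have haS : a ∈ S := ⟨ha, h0⟩
  rw [tsum_eq_single (⟨a, haS⟩ : S)]
  · simp only [hf, hq, dslope_same, (ht a ha).2.1, one_pow, mul_one]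
    have := hs a ha h0
    field_simp
  · intro b hba
    have : a ≠ b := fun h => hba (Subtype.ext h.symm)
    simp only [hf]
    rw [dslope_of_ne _ this, slope_def_field, h0, b.2.2]
    simp

lemma generic {D : Set ℂ} (hD : IsOpen D) (hc : IsConnected D) {F p : ℂ → ℂ}
    (hF : DifferentiableOn ℂ F D) (hp : DifferentiableOn ℂ p D)
    (hcom : ∀ z ∈ D, F z = 0 → p z ≠ 0) {ζ x : ℂ} (hζ : ζ ∈ D) (hζ0 : F ζ = 0)
    (hx : x ∈ D) (hx0 : F x ≠ 0) : ∃ c : ℂ, SimpZ D (fun z => p z + c * F z) := by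
  set W : ℂ → ℂ := fun z => deriv p z * F z - p z * deriv F z with hW
  have hWd : DifferentiableOn ℂ W D :=
    ((hp.deriv hD).mul hF).sub (hp.mul (hF.deriv hD))
  have hWne : ∃ y ∈ D, W y ≠ 0 := by
    by_contra hcon
    push Not at hcon
    have hpc := (hp.differentiableAt (hD.mem_nhds hζ)).continuousAt.eventually_ne (hcom ζ hζ hζ0)
    obtain ⟨r, hr, hball⟩ := Metric.eventually_nhds_iff_ball.1 (hpc.and (hD.eventually_mem hζ))
    have hd : DifferentiableOn ℂ (fun z => F z / p z) (Metric.ball ζ r) :=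
      (hF.mono fun z hz => (hball z hz).2).div (hp.mono fun z hz => (hball z hz).2)
        fun z hz => (hball z hz).1
    have hconst : ∀ z ∈ Metric.ball ζ r, F z = 0 := by
      intro z hz
      have h1 := Metric.isOpen_ball.is_const_of_deriv_eq_zero (convex_ball ζ r).isPreconnected hd
        (fun y hy => by
          have hyD := hD.mem_nhds (hball y hy).2
          have h3 := ((hF.differentiableAt hyD).hasDerivAt.div
            (hp.differentiableAt hyD).hasDerivAt (hball y hy).1).deriv
          change deriv (fun z => F z / p z) y = _ at h3
          rw [h3]
          have h4 := hcon y (hball y hy).2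
          have h5 : deriv F y * p y - F y * deriv p y = 0 := by
            rw [← neg_eq_zero, ← h4]; simp only [hW]; ring
          rw [h5]; simp) hz (Metric.mem_ball_self hr)
      rw [hζ0, zero_div, div_eq_zero_iff] at h1
      exact h1.resolve_right (hball z hz).1
    have := (hF.analyticOnNhd hD).eqOn_zero_of_preconnected_of_eventuallyEq_zero
      hc.isPreconnected hζ (Filter.eventually_of_mem (Metric.ball_mem_nhds ζ hr) hconst)
    exact hx0 (this hx)
  obtain ⟨y, hy, hy0⟩ := hWne
  have hcount : {z | z ∈ D ∧ W z = 0}.Countable :=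
    countable_of_locfin hD (fun z hz => hz.1) (zeros_locfin hD hc hWd hy hy0)
  have hbad := hcount.image fun z => -p z / F z
  obtain ⟨c, hcb⟩ : ∃ c, c ∉ (fun z => -p z / F z) '' {z | z ∈ D ∧ W z = 0} := by
    by_contra hcon
    push Not at hcon
    exact not_countable_complex (by rwa [eq_univ_of_forall hcon] at hbad)
  refine ⟨c, fun z hz h0 hd0 => hcb ⟨z, ⟨hz, ?_⟩, ?_⟩⟩
  · have hzD := hD.mem_nhds hz
    have h3 := ((hp.differentiableAt hzD).hasDerivAt.add
      ((hF.differentiableAt hzD).hasDerivAt.const_mul c)).deriv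
    change deriv (fun z => p z + c * F z) z = _ at h3
    rw [h3] at hd0
    simp only at h0
    simp only [hW]
    linear_combination F z * hd0 - deriv F z * h0
  · have hFz : F z ≠ 0 := by
      intro h
      refine hcom z hz h ?_
      simpa [h] using h0
    simp only at h0 ⊢
    field_simp
    linear_combination -h0

/-- an element of `Hol D` from an ambient holomorphic function -/
def mkHol {D : Set ℂ} (F : ℂ → ℂ) (hF : DifferentiableOn ℂ F D) : Hol D :=
  ⟨fun z => F z, F, hF, fun _ => rfl⟩

lemma mkHol_apply {D : Set ℂ} (F : ℂ → ℂ) (hF : DifferentiableOn ℂ F D) (z : D) :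
    (mkHol F hF : D → ℂ) z = F z := rfl

lemma hol_ext {D : Set ℂ} {f g : Hol D} (h : ∀ z : D, (f : D → ℂ) z = (g : D → ℂ) z) : f = g :=
  Subtype.ext (funext h)

lemma exists_mk {D : Set ℂ} (f : Hol D) : ∃ F, ∃ hF : DifferentiableOn ℂ F D, f = mkHol F hF := by
  obtain ⟨F, hF, h⟩ := f.2
  exact ⟨F, hF, hol_ext fun z => (h z).symm⟩

lemma exists_ne_of_ne {D : Set ℂ} {F : ℂ → ℂ} {hF : DifferentiableOn ℂ F D}
    (h : mkHol F hF ≠ 0) : ∃ x ∈ D, F x ≠ 0 := by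
  by_contra hcon
  push Not at hcon
  exact h (hol_ext fun z => hcon z z.2)

lemma simpZ_sub {D : Set ℂ} (ζ : ℂ) : SimpZ D (fun z => z - ζ) := by
  intro z _ _
  simp

lemma not_oInf_of_simpZ {D : Set ℂ} (hD : IsOpen D) (hc : IsConnected D) {F : ℂ → ℂ}
    (hF : DifferentiableOn ℂ F D) (hs : SimpZ D F) : ¬ oInf (mkHol F hF) := by
  rintro (h | h)
  · obtain ⟨x, hx, hx0⟩ := hs.exists_ne hD hc.nonempty
    exact hx0 (congrFun (congrArg Subtype.val h) ⟨x, hx⟩)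
  · obtain ⟨ζ, hζ, g, hg⟩ := h 2
    obtain ⟨G, hG, rfl⟩ := exists_mk g
    have hev : F =ᶠ[𝓝 (ζ : ℂ)] fun z => (z - ζ) ^ 2 * G z :=
      (hD.eventually_mem ζ.2).mono fun z hz => hg ⟨z, hz⟩
    refine hs ζ ζ.2 hζ ?_
    rw [hev.deriv_eq]
    have h1 := (((hasDerivAt_id (ζ : ℂ)).sub_const (ζ : ℂ)).pow 2).mul
      (hG.differentiableAt (hD.mem_nhds ζ.2)).hasDerivAt
    have h2 := h1.deriv
    change deriv (fun z : ℂ => (z - ζ) ^ 2 * G z) ζ = _ at h2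
    rw [h2]; simp

lemma exists_zero {D : Set ℂ} (hD : IsOpen D) {P : Ideal (Hol D)} (hP : P ≠ ⊤)
    {F : ℂ → ℂ} {hF : DifferentiableOn ℂ F D} (h : mkHol F hF ∈ P) : ∃ ζ ∈ D, F ζ = 0 := by
  by_contra hcon
  push Not at hcon
  obtain ⟨G, hG, hFG⟩ := exists_div hD (differentiableOn_const (1 : ℂ)) hF
    (fun z hz h0 => (hcon z hz h0).elim) (fun z hz h0 => (hcon z hz h0).elim)
  refine hP (P.eq_top_iff_one.2 ?_)
  have : (1 : Hol D) = mkHol G hG * mkHol F hF :=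
    hol_ext fun z => (hFG z z.2).trans (mul_comm _ _)
  rw [this]
  exact P.mul_mem_left _ h

lemma maximal_of_simple {D : Set ℂ} (hD : IsOpen D) (hc : IsConnected D)
    (P : Ideal (Hol D)) (hP : P.IsPrime) {H : ℂ → ℂ} (hH : DifferentiableOn ℂ H D)
    (hs : SimpZ D H) (hmem : mkHol H hH ∈ P) : P.IsMaximal := by
  obtain ⟨x, hx, hx0⟩ := hs.exists_ne hD hc.nonempty
  rw [Ideal.isMaximal_iff]
  refine ⟨fun h => hP.ne_top (P.eq_top_iff_one.2 h), ?_⟩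
  intro J g hPJ hgP hgJ
  obtain ⟨g, hg, rfl⟩ := exists_mk g
  have hS1 : ∀ K ⊆ D, IsCompact K → ({z | (z ∈ D ∧ H z = 0) ∧ g z = 0} ∩ K).Finite :=
    fun K hK hKc => (zeros_locfin hD hc hH hx hx0 K hK hKc).subset
      (inter_subset_inter_left _ fun z hz => hz.1)
  obtain ⟨H1, hH1, hs1, hz1⟩ := weierstrass hD (fun z hz => hz.1.1) hS1
  obtain ⟨H2, hH2, h12⟩ := exists_div hD hH hH1 hs1 (fun z hz h0 => ((hz1 z hz).1 h0).1.2)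
  obtain ⟨k, hk, hgk⟩ := exists_div hD hg hH1 hs1 (fun z hz h0 => ((hz1 z hz).1 h0).2)
  have hH1P : mkHol H1 hH1 ∉ P := by
    intro h
    apply hgP
    have : mkHol g hg = mkHol k hk * mkHol H1 hH1 :=
      hol_ext fun z => (hgk z z.2).trans (mul_comm _ _)
    rw [this]
    exact P.mul_mem_left _ h
  have hH2P : mkHol H2 hH2 ∈ P := by
    have : mkHol H hH = mkHol H1 hH1 * mkHol H2 hH2 := hol_ext fun z => h12 z z.2
    rw [this] at hmem
    exact (hP.mem_or_mem hmem).resolve_left hH1P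
  have hder : ∀ z ∈ D, deriv H z = deriv H1 z * H2 z + H1 z * deriv H2 z := by
    intro z hz
    have hev : H =ᶠ[𝓝 z] fun w => H1 w * H2 w := (hD.eventually_mem hz).mono h12
    rw [hev.deriv_eq]
    exact ((hH1.differentiableAt (hD.mem_nhds hz)).hasDerivAt.mul
      (hH2.differentiableAt (hD.mem_nhds hz)).hasDerivAt).deriv
  have hHz : ∀ z ∈ D, H2 z = 0 → H z = 0 := fun z hz h => by rw [h12 z hz, h, mul_zero]
  have hs2 : SimpZ D H2 := by
    intro z hz h0 hd
    refine hs z hz (hHz z hz h0) ?_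
    rw [hder z hz, h0, hd]; simp
  have hg2 : ∀ z ∈ D, H2 z = 0 → g z ≠ 0 := by
    intro z hz h0 hg0
    refine hs z hz (hHz z hz h0) ?_
    rw [hder z hz, h0, (hz1 z hz).2 ⟨⟨hz, hHz z hz h0⟩, hg0⟩]; simp
  obtain ⟨u, hu, hug⟩ := interpolate hD hc hH2 hs2 (fun z => (g z)⁻¹)
  obtain ⟨v, hv, hvH⟩ := exists_div hD (F := fun z => 1 - u z * g z)
    ((differentiableOn_const 1).sub (hu.mul hg)) hH2 hs2 (fun z hz h0 => by
      rw [hug z hz h0, inv_mul_cancel₀ (hg2 z hz h0), sub_self])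
  have : (1 : Hol D) = mkHol u hu * mkHol g hg + mkHol v hv * mkHol H2 hH2 :=
    hol_ext fun z => by
      change (1 : ℂ) = u z * g z + v z * H2 z
      have := hvH z z.2
      linear_combination this
  rw [this]
  exact J.add_mem (J.mul_mem_left _ hgJ) (J.mul_mem_left _ (hPJ hH2P))

lemma maximal_of_bounded {D : Set ℂ} (hD : IsOpen D) (hc : IsConnected D)
    (P : Ideal (Hol D)) (hP : P.IsPrime) (n : ℕ) : ∀ f ∈ P, f ≠ 0 →
    (∀ ζ ∈ ZD f, ¬ ordGE f ζ n) → P.IsMaximal := by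
  induction n with
  | zero =>
    intro f hf _ h
    obtain ⟨F, hF, rfl⟩ := exists_mk f
    obtain ⟨ζ, hζ, h0⟩ := exists_zero hD hP.ne_top hf
    exact (h ⟨ζ, hζ⟩ h0 ⟨mkHol F hF, fun z => by simp⟩).elim
  | succ n ih =>
    intro f hf hf0 h
    obtain ⟨F, hF, rfl⟩ := exists_mk f
    obtain ⟨x, hx, hx0⟩ := exists_ne_of_ne hf0
    obtain ⟨H, hH, hs, hz⟩ := weierstrass hD (fun z hz => hz.1) (zeros_locfin hD hc hF hx hx0)
    obtain ⟨Q, hQ, hFQ⟩ := exists_div hD hF hH hs (fun z hzD h0 => ((hz z hzD).1 h0).2)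
    have e : mkHol F hF = mkHol H hH * mkHol Q hQ := hol_ext fun z => hFQ z z.2
    have hf' := hf
    rw [e] at hf'
    rcases hP.mem_or_mem hf' with h1 | h1
    · exact maximal_of_simple hD hc P hP hH hs h1
    · refine ih _ h1 ?_ ?_
      · intro h0
        rw [e, h0, mul_zero] at hf0
        exact hf0 rfl
      · rintro ζ hζ ⟨g, hg⟩
        obtain ⟨g, hgd, rfl⟩ := exists_mk g
        have hζF : F ζ = 0 := by
          have : Q ζ = 0 := hζ
          rw [hFQ ζ ζ.2, this, mul_zero]
        have hζH : H ζ = 0 := (hz ζ ζ.2).2 ⟨ζ.2, hζF⟩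
        obtain ⟨k, hk, hHk⟩ := exists_div hD hH (H := fun z => z - (ζ : ℂ)) (by fun_prop)
          (simpZ_sub _) (fun z _ h0 => by rw [sub_eq_zero.1 h0]; exact hζH)
        refine h ζ hζF ⟨mkHol k hk * mkHol g hgd, fun z => ?_⟩
        change F z = (z - ζ : ℂ) ^ (n + 1) * (k z * g z)
        have h2 : Q z = (z - ζ : ℂ) ^ n * g z := hg z
        have h3 : H z = (z - ζ : ℂ) * k z := hHk z z.2
        rw [hFQ z z.2, h2, h3]; ring

/-- Let `D` be a domain in `ℂ` and `P` a prime ideal in `H(D)`. Then `P` is not maximal if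
and only if `o(f) = ∞` for every `f ∈ P`. -/
theorem not_maximal_iff_oInf {D : Set ℂ} (hD : IsOpen D) (hDconn : IsConnected D)
    (P : Ideal (Hol D)) (hP : P.IsPrime) :
    ¬ P.IsMaximal ↔ ∀ f ∈ P, oInf f := by
  constructor
  · intro hmax f hf
    by_contra hcon
    unfold oInf at hcon
    push Not at hcon
    obtain ⟨hf0, n, hn⟩ := hcon
    exact hmax (maximal_of_bounded hD hDconn P hP n f hf hf0 hn)
  · intro h hmax
    -- any element outside `P` is invertible modulo `P`
    have hinv : ∀ g ∉ P, ∃ a : Hol D, ∃ p ∈ P, a * g + p = 1 := by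
      intro g hg
      have := (Ideal.isMaximal_iff.1 hmax).2 (P ⊔ Ideal.span {g}) g le_sup_left hg
        (Ideal.mem_sup_right (Ideal.mem_span_singleton_self g))
      obtain ⟨p, hp, q, hq, hpq⟩ := Submodule.mem_sup.1 this
      obtain ⟨a, rfl⟩ := Ideal.mem_span_singleton'.1 hq
      exact ⟨a, p, hp, by rw [add_comm]; exact hpq⟩
    by_cases hbot : ∀ f ∈ P, f = 0
    · obtain ⟨ζ, hζ⟩ := hDconn.nonempty
      have hd : DifferentiableOn ℂ (fun z => z - ζ) D := by fun_prop
      have hg : mkHol _ hd ∉ P := fun hg =>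
        not_oInf_of_simpZ hD hDconn hd (simpZ_sub ζ) (h _ hg)
      obtain ⟨a, p, hp, hap⟩ := hinv _ hg
      rw [hbot p hp, add_zero] at hap
      have h1 : (a : D → ℂ) ⟨ζ, hζ⟩ * (ζ - ζ) = 1 :=
        congrFun (congrArg Subtype.val hap) ⟨ζ, hζ⟩
      simp at h1
    · push Not at hbot
      obtain ⟨f, hf, hf0⟩ := hbot
      obtain ⟨F, hF, rfl⟩ := exists_mk f
      obtain ⟨x, hx, hx0⟩ := exists_ne_of_ne hf0
      obtain ⟨ζ, hζ, hζ0⟩ := exists_zero hD hP.ne_top hf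
      obtain ⟨H, hH, hs, hz⟩ := weierstrass hD (fun z hz => hz.1)
        (zeros_locfin hD hDconn hF hx hx0)
      have hHP : mkHol H hH ∉ P := fun hg => not_oInf_of_simpZ hD hDconn hH hs (h _ hg)
      obtain ⟨a, p, hp, hap⟩ := hinv _ hHP
      obtain ⟨p, hpd, rfl⟩ := exists_mk p
      have hcom : ∀ z ∈ D, F z = 0 → p z ≠ 0 := by
        intro z hzD hF0 hp0
        have h1 : (a : D → ℂ) ⟨z, hzD⟩ * H z + p z = 1 :=
          congrFun (congrArg Subtype.val hap) ⟨z, hzD⟩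
        rw [(hz z hzD).2 ⟨hzD, hF0⟩, hp0] at h1
        simp at h1
      obtain ⟨c, hcs⟩ := generic hD hDconn hF hpd hcom hζ hζ0 hx hx0
      have hd : DifferentiableOn ℂ (fun z => p z + c * F z) D := hpd.add (hF.const_mul c)
      refine not_oInf_of_simpZ hD hDconn hd hcs (h _ ?_)
      have e : mkHol _ hd = mkHol p hpd +
          mkHol (fun _ => c) (differentiableOn_const c) * mkHol F hF := hol_ext fun z => rfl
      rw [e]
      exact P.add_mem hp (P.mul_mem_left _ hf)
end
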